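/- arXiv:2412.00995 — 2 statements merged into one kernel-verified Lean document; each statement's English description precedes it below -/
import Mathlib

section
/- Let k ≥ 0 be an integer and p a prime. (1) If p is odd, f ∈ V(ℤ_p) is not ℚ_p-soluble, and there exists a ℚ_p-soluble f₀ ∈ V(ℤ_p) with f ≡ f₀ (mod p^{2k}V(ℤ_p)), then p^{2k+2} divides Δ(f). (2) If p = 2, f ∈ V(ℤ₂) is not ℚ₂-soluble, and there exists a ℚ₂-soluble f₀ ∈ V(ℤ₂) with f ≡ f₀ (mod 2^{2k+2}V(ℤ₂)), then 2^{2k+2} divides Δ(f). -/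
noncomputable section

namespace BQPaper

/-- A binary quartic form `a x⁴ + b x³y + c x²y² + d xy³ + e y⁴` over `R`,
recorded by its coefficients. -/
structure BQ (R : Type*) where
  a : R
  b : R
  c : R
  d : R
  e : R

/-- A 2×2 matrix `!![p, q; r, s]`, recorded by its entries. -/
structure Mat2 (R : Type*) where
  p : R
  q : R
  r : R
  s : R

variable {R S : Type*} [CommRing R] [CommRing S]

def Mat2.det (m : Mat2 R) : R := m.p * m.s - m.q * m.r

/-- Matrix product. -/
def Mat2.mul (m n : Mat2 R) : Mat2 R :=
  ⟨m.p * n.p + m.q * n.r, m.p * n.q + m.q * n.s,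
   m.r * n.p + m.s * n.r, m.r * n.q + m.s * n.s⟩

/-- Scalar multiple of a matrix. -/
def Mat2.smul (z : R) (m : Mat2 R) : Mat2 R := ⟨z * m.p, z * m.q, z * m.r, z * m.s⟩

def Mat2.map (φ : R →+* S) (m : Mat2 R) : Mat2 S := ⟨φ m.p, φ m.q, φ m.r, φ m.s⟩

/-- Evaluation of a binary quartic form at `(x, y)`. -/
def BQ.eval (f : BQ R) (x y : R) : R :=
  f.a * x ^ 4 + f.b * x ^ 3 * y + f.c * x ^ 2 * y ^ 2 + f.d * x * y ^ 3 + f.e * y ^ 4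

/-- The invariant `I(f) = 12ae − 3bd + c²`. -/
def BQ.invI (f : BQ R) : R := 12 * f.a * f.e - 3 * f.b * f.d + f.c ^ 2

/-- The invariant `J(f) = 72ace + 9bcd − 27ad² − 27eb² − 2c³`. -/
def BQ.invJ (f : BQ R) : R :=
  72 * f.a * f.c * f.e + 9 * f.b * f.c * f.d - 27 * f.a * f.d ^ 2
    - 27 * f.e * f.b ^ 2 - 2 * f.c ^ 3

/-- The discriminant of a binary quartic form; one has `Δ = (4I³ − J²)/27`. -/
def BQ.disc (f : BQ R) : R :=
  256 * f.a ^ 3 * f.e ^ 3 - 192 * f.a ^ 2 * f.b * f.d * f.e ^ 2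
    - 128 * f.a ^ 2 * f.c ^ 2 * f.e ^ 2 + 144 * f.a ^ 2 * f.c * f.d ^ 2 * f.e
    - 27 * f.a ^ 2 * f.d ^ 4 + 144 * f.a * f.b ^ 2 * f.c * f.e ^ 2
    - 6 * f.a * f.b ^ 2 * f.d ^ 2 * f.e - 80 * f.a * f.b * f.c ^ 2 * f.d * f.e
    + 18 * f.a * f.b * f.c * f.d ^ 3 + 16 * f.a * f.c ^ 4 * f.e
    - 4 * f.a * f.c ^ 3 * f.d ^ 2 - 27 * f.b ^ 4 * f.e ^ 2
    + 18 * f.b ^ 3 * f.c * f.d * f.e - 4 * f.b ^ 3 * f.d ^ 3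
    - 4 * f.b ^ 2 * f.c ^ 3 * f.e + f.b ^ 2 * f.c ^ 2 * f.d ^ 2

/-- Multiplication of all coefficients of a form by a scalar. -/
def BQ.rsmul (t : R) (f : BQ R) : BQ R := ⟨t * f.a, t * f.b, t * f.c, t * f.d, t * f.e⟩

/-- Substitution action of a 2×2 matrix on binary quartic forms:
`(m • f)(x,y) = f((x,y)·m) = f(px + ry, qx + sy)` for `m = !![p, q; r, s]`. -/
def BQ.subst (m : Mat2 R) (f : BQ R) : BQ R where
  a := f.a * m.p ^ 4 + f.b * m.p ^ 3 * m.q + f.c * m.p ^ 2 * m.q ^ 2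
      + f.d * m.p * m.q ^ 3 + f.e * m.q ^ 4
  b := 4 * f.a * m.p ^ 3 * m.r + f.b * m.p ^ 3 * m.s + 3 * f.b * m.p ^ 2 * m.q * m.r
      + 2 * f.c * m.p ^ 2 * m.q * m.s + 2 * f.c * m.p * m.q ^ 2 * m.r
      + 3 * f.d * m.p * m.q ^ 2 * m.s + f.d * m.q ^ 3 * m.r + 4 * f.e * m.q ^ 3 * m.s
  c := 6 * f.a * m.p ^ 2 * m.r ^ 2 + 3 * f.b * m.p ^ 2 * m.r * m.s
      + 3 * f.b * m.p * m.q * m.r ^ 2 + f.c * m.p ^ 2 * m.s ^ 2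
      + 4 * f.c * m.p * m.q * m.r * m.s + f.c * m.q ^ 2 * m.r ^ 2
      + 3 * f.d * m.p * m.q * m.s ^ 2 + 3 * f.d * m.q ^ 2 * m.r * m.s
      + 6 * f.e * m.q ^ 2 * m.s ^ 2
  d := 4 * f.a * m.p * m.r ^ 3 + 3 * f.b * m.p * m.r ^ 2 * m.s + f.b * m.q * m.r ^ 3
      + 2 * f.c * m.p * m.r * m.s ^ 2 + 2 * f.c * m.q * m.r ^ 2 * m.s
      + f.d * m.p * m.s ^ 3 + 3 * f.d * m.q * m.r * m.s ^ 2 + 4 * f.e * m.q * m.s ^ 3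
  e := f.a * m.r ^ 4 + f.b * m.r ^ 3 * m.s + f.c * m.r ^ 2 * m.s ^ 2
      + f.d * m.r * m.s ^ 3 + f.e * m.s ^ 4

/-- The twisted action `(γ·f)(x,y) = f((x,y)·γ)/det(γ)²`, which descends to `PGL₂`.
(`Ring.inverse` is the genuine inverse when `det` is a unit.) -/
def BQ.twist (m : Mat2 R) (f : BQ R) : BQ R :=
  BQ.rsmul (Ring.inverse m.det ^ 2) (f.subst m)

/-- Coefficientwise map of forms along a ring homomorphism. -/
def BQ.map (φ : R →+* S) (f : BQ R) : BQ S := ⟨φ f.a, φ f.b, φ f.c, φ f.d, φ f.e⟩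

end BQPaper

namespace BQPaper

variable {p : ℕ} [Fact p.Prime]

/-- A binary quartic form `f` over `ℤ_p` is `ℚ_p`-soluble if `z² = f(x,y)` has a
solution with `(x,y) ≠ (0,0)` in `ℚ_p`. -/
def SolubleP (f : BQ ℤ_[p]) : Prop :=
  ∃ x y z : ℚ_[p], ¬(x = 0 ∧ y = 0) ∧ z ^ 2 = (f.map (PadicInt.Coe.ringHom)).eval x y

/-- Coefficientwise congruence `f ≡ g (mod p^j V(ℤ_p))`. -/
def CongMod (j : ℕ) (f g : BQ ℤ_[p]) : Prop :=
  (p : ℤ_[p]) ^ j ∣ (f.a - g.a) ∧ (p : ℤ_[p]) ^ j ∣ (f.b - g.b) ∧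
  (p : ℤ_[p]) ^ j ∣ (f.c - g.c) ∧ (p : ℤ_[p]) ^ j ∣ (f.d - g.d) ∧
  (p : ℤ_[p]) ^ j ∣ (f.e - g.e)

open Polynomial in
theorem hasse_big {p : ℕ} [Fact p.Prime] (hp : 7 ≤ p) (a b c e : ZMod p) (he : e ≠ 0)
    (h : ∀ x : ZMod p, ¬ IsSquare (e * x ^ 4 + c * x ^ 2 + b * x + a)) :
    b = 0 ∧ 4 * a * e = c ^ 2 := by
  have hpp : p.Prime := Fact.out
  have hodd : p % 2 = 1 := hpp.eq_two_or_odd.resolve_left (by omega)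
  have hnz : ∀ n : ℕ, 0 < n → n < p → (n : ZMod p) ≠ 0 := by
    intro n h0 h1 h2
    rw [ZMod.natCast_eq_zero_iff] at h2
    exact absurd (Nat.le_of_dvd h0 h2) (by omega)
  have h2 : (2 : ZMod p) ≠ 0 := by exact_mod_cast hnz 2 (by norm_num) (by omega)
  set f : (ZMod p)[X] := C e * X ^ 4 + C c * X ^ 2 + C b * X + C a with hf
  set P : (ZMod p)[X] := X ^ p - X with hP
  have hPm : P.Monic := by
    apply monic_X_pow_sub
    simp only [degree_X]
    exact_mod_cast hpp.one_lt
  have hPd : P.natDegree = p := FiniteField.X_pow_card_sub_X_natDegree_eq _ hpp.one_lt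
  have hPe : ∀ x : ZMod p, P.eval x = 0 := by
    intro x; simp [hP]
  have hP' : derivative P = -1 := by
    simp [hP, derivative_X_pow]
  set m := p / 2 with hm
  have hpm : p = 2 * m + 1 := by omega
  have hmc : 2 * (m : ZMod p) = -1 := by
    have : ((2 * m + 1 : ℕ) : ZMod p) = 0 := by rw [← hpm]; simp
    push_cast at this
    linear_combination this
  have hfd : f.natDegree ≤ 4 := by rw [hf]; compute_degree
  set H : (ZMod p)[X] := f ^ m + 1 with hH
  have hHd : H.natDegree ≤ 4 * m := by
    rw [hH]
    refine (natDegree_add_le _ _).trans ?_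
    simp only [natDegree_one, max_le_iff, zero_le, and_true]
    refine natDegree_pow_le.trans ?_
    nlinarith
  have hHe : ∀ x : ZMod p, H.eval x = 0 := by
    intro x
    have hx := h x
    have hv : f.eval x = e * x ^ 4 + c * x ^ 2 + b * x + a := by simp [hf]
    rw [← hv] at hx
    have hx0 : f.eval x ≠ 0 := by
      intro h0; apply hx; rw [h0]; exact ⟨0, by simp⟩
    have := (ZMod.pow_div_two_eq_neg_one_or_one p hx0).resolve_left
      (fun h1 => hx ((ZMod.euler_criterion p hx0).2 h1))
    simp [hH, hm, this]
  set g := H /ₘ P with hg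
  have hHg : H = P * g := by
    have h1 := modByMonic_add_div H P
    have h3 : H %ₘ P = 0 := by
      apply eq_zero_of_natDegree_lt_card_of_eval_eq_zero (H %ₘ P) (f := (id : ZMod p → ZMod p))
        Function.injective_id
      · intro x
        have := congrArg (eval x) h1
        simpa [hPe, hHe] using this
      · rw [ZMod.card]
        have := natDegree_modByMonic_lt H hPm (by intro h; rw [h] at hPd; simp at hPd; omega)
        omega
    rw [h3, zero_add] at h1
    exact h1.symm
  have hgd : g.natDegree ≤ p - 2 := by
    rw [hg, natDegree_divByMonic _ hPm, hPd]; omega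
  set f' := derivative f with hf'
  set f'' := derivative f' with hf''
  have hrel : 2 * f * derivative H + f' * (H - 1) = 0 := by
    have h1 : derivative H = C (m : ZMod p) * f ^ (m - 1) * f' := by
      simp [hH, derivative_pow, hf']
    have h3 : f ^ m = f ^ (m - 1) * f := by
      rw [← pow_succ]; congr 1; omega
    have h4 : (2 : (ZMod p)[X]) * C (m : ZMod p) = -1 := by
      have := congrArg C hmc
      simpa only [map_mul, map_neg, map_one, map_ofNat] using this
    rw [h1, hH, h3]
    linear_combination f ^ (m - 1) * f * f' * h4
  have hH' : derivative H = - g + P * derivative g := by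
    rw [hHg, derivative_mul, hP']; ring
  set q := 2 * f * derivative g + f' * g with hq
  have e1 : P * q = 2 * f * g + f' := by
    rw [hH', hHg] at hrel
    linear_combination hrel
  have e2 : -2 * q + P * derivative q = f' * g + f'' := by
    have := congrArg derivative e1
    simp only [derivative_mul, derivative_add, hP', derivative_ofNat] at this
    linear_combination this - hq
  have e3 : f' ^ 2 - 4 * f * q - 2 * f * f'' = P * (f' * q - 2 * f * derivative q) := by
    linear_combination (-f') * e1 + 2 * f * e2
  have hf'd : f'.natDegree ≤ 3 := (natDegree_derivative_le _).trans (by omega)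
  have hqd : q.natDegree ≤ 2 := by
    by_cases hq0 : q = 0
    · simp [hq0]
    have h5 := congrArg natDegree e1
    rw [natDegree_mul hPm.ne_zero hq0, hPd] at h5
    have h6 : (2 * f * g + f').natDegree ≤ p + 2 := by
      refine (natDegree_add_le _ _).trans (max_le ?_ (by omega))
      refine natDegree_mul_le.trans ?_
      have : (2 * f).natDegree ≤ 4 := by
        refine natDegree_mul_le.trans ?_
        have : (2 : (ZMod p)[X]).natDegree = 0 := natDegree_ofNat 2
        omega
      omega
    omega
  obtain ⟨q0, q1, q2, hqq⟩ : ∃ q0 q1 q2 : ZMod p, q = C q2 * X ^ 2 + C q1 * X + C q0 :=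
    ⟨_, _, _, eq_quadratic_of_degree_le_two (natDegree_le_iff_degree_le.1 hqd)⟩
  have E1 : f' = C (4 * e) * X ^ 3 + C (2 * c) * X + C b := by
    rw [hf', hf]; simp [derivative_X_pow]; simp only [map_ofNat]; ring
  have E2 : f'' = C (12 * e) * X ^ 2 + C (2 * c) := by
    rw [hf'', E1]; simp [derivative_X_pow]; simp only [map_ofNat]; ring
  have E3 : f' ^ 2 - 4 * f * q - 2 * f * f'' =
      C (16 * e ^ 2 - 4 * e * q2 - 24 * e ^ 2) * X ^ 6 + C (- 4 * e * q1) * X ^ 5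
      + C (16 * e * c - 4 * e * q0 - 4 * c * q2 - 28 * e * c) * X ^ 4
      + C (8 * e * b - 4 * c * q1 - 4 * b * q2 - 24 * b * e) * X ^ 3
      + C (4 * c ^ 2 - 4 * c * q0 - 4 * b * q1 - 4 * a * q2 - 4 * c ^ 2 - 24 * a * e) * X ^ 2
      + C (4 * b * c - 4 * b * q0 - 4 * a * q1 - 4 * b * c) * X
      + C (b ^ 2 - 4 * a * q0 - 4 * a * c) := by
    rw [E1, E2, hqq, hf]
    simp only [map_add, map_sub, map_mul, map_pow, map_neg, map_ofNat]; ring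
  have E4 : f' ^ 2 - 4 * f * q - 2 * f * f'' = 0 := by
    by_contra hne
    have h7 : (f' ^ 2 - 4 * f * q - 2 * f * f'').natDegree ≤ 6 := by
      rw [E3]; compute_degree
    have h8 : f' * q - 2 * f * derivative q ≠ 0 := by
      intro h0; rw [h0, mul_zero] at e3; exact hne e3
    rw [e3, natDegree_mul hPm.ne_zero h8] at h7
    omega
  rw [E3] at E4
  have c6 := congrArg (fun r => coeff r 6) E4
  have c5 := congrArg (fun r => coeff r 5) E4
  have c4 := congrArg (fun r => coeff r 4) E4
  have c3 := congrArg (fun r => coeff r 3) E4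
  have c2 := congrArg (fun r => coeff r 2) E4
  simp only [coeff_add, coeff_C_mul, coeff_X_pow, coeff_X, coeff_C, coeff_zero] at c6 c5 c4 c3 c2
  norm_num at c6 c5 c4 c3 c2
  have h4 : (4 : ZMod p) ≠ 0 := by exact_mod_cast hnz 4 (by norm_num) (by omega)
  have h8 : (8 : ZMod p) ≠ 0 := by
    have : (8 : ZMod p) = 2 * 4 := by norm_num
    rw [this]; exact mul_ne_zero h2 h4
  have k2 : q2 = -2 * e := by
    have : 4 * e * (q2 + 2 * e) = 0 := by linear_combination -c6
    have := (mul_eq_zero.1 this).resolve_left (mul_ne_zero h4 he)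
    linear_combination this
  have k1 : q1 = 0 := by
    rcases c5 with h | h
    · exact absurd h (by first | exact mul_ne_zero h4 he | simp [h4, he])
    · exact h
  have k0 : q0 = - c := by
    have : 4 * e * (q0 + c) = 0 := by rw [k2] at c4; linear_combination -c4
    have := (mul_eq_zero.1 this).resolve_left (mul_ne_zero h4 he)
    linear_combination this
  subst k2 k1 k0
  constructor
  · have : 8 * e * b = 0 := by linear_combination -c3
    exact (mul_eq_zero.1 this).resolve_left (mul_ne_zero h8 he)
  · have : 4 * (4 * a * e - c ^ 2) = 0 := by linear_combination -c2
    have := (mul_eq_zero.1 this).resolve_left h4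
    linear_combination this

set_option maxRecDepth 100000 in
theorem hasse_small3 : ∀ a b c e : ZMod 3, (¬ ∃ w, e = w * w) →
    (∀ x : ZMod 3, ¬ ∃ w, e * x ^ 4 + c * x ^ 2 + b * x + a = w * w) →
    b = 0 ∧ 4 * a * e = c ^ 2 := by decide

set_option maxRecDepth 100000 in
theorem hasse_small5 : ∀ e : ZMod 5, (¬ ∃ w, e = w * w) → ∀ a : ZMod 5, (¬ ∃ w, a = w * w) → ∀ b c : ZMod 5,
    (∀ x : ZMod 5, ¬ ∃ w, e * x ^ 4 + c * x ^ 2 + b * x + a = w * w) →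
    b = 0 ∧ 4 * a * e = c ^ 2 := by decide

theorem hasse_all {p : ℕ} [Fact p.Prime] (hp : p ≠ 2) (a b c e : ZMod p) (he : ¬ IsSquare e)
    (h : ∀ x : ZMod p, ¬ IsSquare (e * x ^ 4 + c * x ^ 2 + b * x + a)) :
    b = 0 ∧ 4 * a * e = c ^ 2 := by
  have hpp : p.Prime := Fact.out
  by_cases h7 : 7 ≤ p
  · exact hasse_big h7 a b c e (by rintro rfl; exact he ⟨0, by simp⟩) h
  have : p = 3 ∨ p = 5 := by
    have h2 := hpp.two_le
    interval_cases p
    · exact absurd rfl hp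
    · simp
    · exact absurd hpp (by norm_num)
    · simp
    · exact absurd hpp (by norm_num)
  rcases this with rfl | rfl
  · exact hasse_small3 a b c e he h
  · have h0 := h 0
    exact hasse_small5 e he a (by intro h'; apply h0; simpa [IsSquare] using h') b c h

theorem soluble_of_int (f : BQ ℤ_[p]) (x y z : ℤ_[p]) (h0 : ¬(x = 0 ∧ y = 0))
    (h : z ^ 2 = f.eval x y) : SolubleP f := by
  refine ⟨x, y, z, ?_, ?_⟩
  · simpa using h0
  · have := congrArg (PadicInt.Coe.ringHom : ℤ_[p] →+* ℚ_[p]) h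
    simp only [BQ.eval, BQ.map, map_add, map_mul, map_pow] at this ⊢
    exact this

theorem int_of_soluble (f : BQ ℤ_[p]) (h : SolubleP f) :
    (∃ t z : ℤ_[p], z ^ 2 = f.eval 1 t) ∨ (∃ t z : ℤ_[p], z ^ 2 = f.eval t 1) := by
  obtain ⟨x, y, z, h0, h⟩ := h
  have key : ∀ (u : ℤ_[p]) (w : ℚ_[p]), w ^ 2 = (u : ℚ_[p]) → ∃ z : ℤ_[p], z ^ 2 = u := by
    intro u w hw
    have : ‖w‖ ≤ 1 := by
      have h1 : ‖w‖ ^ 2 ≤ 1 := by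
        rw [← norm_pow, hw]; exact u.2
      nlinarith [norm_nonneg w]
    refine ⟨⟨w, this⟩, ?_⟩
    apply Subtype.ext
    rw [← hw]; rfl
  have hcoe : ∀ u : ℤ_[p], (u : ℚ_[p]) = (PadicInt.Coe.ringHom : ℤ_[p] →+* ℚ_[p]) u := fun _ => rfl
  rcases le_total ‖y‖ ‖x‖ with hxy | hxy
  · left
    have hx : x ≠ 0 := by
      rintro rfl
      apply h0
      simpa using hxy
    have ht : ‖y / x‖ ≤ 1 := by
      rw [norm_div]; exact div_le_one_of_le₀ hxy (norm_nonneg _)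
    obtain ⟨T, hT⟩ : ∃ T : ℤ_[p], (PadicInt.Coe.ringHom : ℤ_[p] →+* ℚ_[p]) T = y / x := ⟨⟨y / x, ht⟩, rfl⟩
    obtain ⟨z', hz'⟩ := key (f.eval 1 T) (z / x ^ 2) (by
      rw [div_pow, h]
      rw [hcoe]
      simp only [BQ.eval, BQ.map, map_add, map_mul, map_pow, map_one]
      rw [hT]
      field_simp)
    exact ⟨_, z', hz'⟩
  · right
    have hx : y ≠ 0 := by
      rintro rfl
      apply h0
      simpa using hxy
    have ht : ‖x / y‖ ≤ 1 := by
      rw [norm_div]; exact div_le_one_of_le₀ hxy (norm_nonneg _)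
    obtain ⟨T, hT⟩ : ∃ T : ℤ_[p], (PadicInt.Coe.ringHom : ℤ_[p] →+* ℚ_[p]) T = x / y := ⟨⟨x / y, ht⟩, rfl⟩
    obtain ⟨z', hz'⟩ := key (f.eval T 1) (z / y ^ 2) (by
      rw [div_pow, h]
      rw [hcoe]
      simp only [BQ.eval, BQ.map, map_add, map_mul, map_pow, map_one]
      rw [hT]
      field_simp)
    exact ⟨_, z', hz'⟩

/-- reversal -/
def rev {R : Type*} [CommRing R] (f : BQ R) : BQ R := ⟨f.e, f.d, f.c, f.b, f.a⟩

/-- `f(x, y + t x)` -/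
def shear {R : Type*} [CommRing R] (t : R) (f : BQ R) : BQ R :=
  ⟨f.a + f.b * t + f.c * t ^ 2 + f.d * t ^ 3 + f.e * t ^ 4,
   f.b + 2 * f.c * t + 3 * f.d * t ^ 2 + 4 * f.e * t ^ 3,
   f.c + 3 * f.d * t + 6 * f.e * t ^ 2, f.d + 4 * f.e * t, f.e⟩

theorem rev_disc {R : Type*} [CommRing R] (f : BQ R) : (rev f).disc = f.disc := by
  simp only [rev, BQ.disc]; ring

theorem shear_disc {R : Type*} [CommRing R] (t : R) (f : BQ R) : (shear t f).disc = f.disc := by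
  simp only [shear, BQ.disc]; ring

theorem rev_eval {R : Type*} [CommRing R] (f : BQ R) (x y : R) : (rev f).eval x y = f.eval y x := by
  simp only [rev, BQ.eval]; ring

theorem shear_eval {R : Type*} [CommRing R] (t : R) (f : BQ R) (x y : R) : (shear t f).eval x y = f.eval x (y + t * x) := by
  simp only [shear, BQ.eval]; ring

theorem rev_sol (f : BQ ℤ_[p]) (h : SolubleP (rev f)) : SolubleP f := by
  obtain ⟨x, y, z, h0, h⟩ := h
  refine ⟨y, x, z, fun h' => h0 ⟨h'.2, h'.1⟩, ?_⟩
  rw [h, ← rev_eval]; rfl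

theorem shear_sol (t : ℤ_[p]) (f : BQ ℤ_[p]) (h : SolubleP (shear t f)) : SolubleP f := by
  rcases int_of_soluble _ h with ⟨s, z, h⟩ | ⟨s, z, h⟩
  · rw [shear_eval] at h
    exact soluble_of_int f _ _ z (by simp) h
  · rw [shear_eval] at h
    refine soluble_of_int f _ _ z ?_ h
    rintro ⟨rfl, h1⟩
    simp at h1

theorem hens (a b c d e : ℤ_[p]) (h : ‖a‖ < ‖b‖ ^ 2) :
    ∃ t : ℤ_[p], a + b * t + c * t ^ 2 + d * t ^ 3 + e * t ^ 4 = 0 := by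
  open Polynomial in
  obtain ⟨t, ht, -⟩ := hensels_lemma (p := p) (R := ℤ_[p]) (a := 0)
    (F := C a + C b * X + C c * X ^ 2 + C d * X ^ 3 + C e * X ^ 4) (by
      simpa [derivative_X_pow] using h)
  exact ⟨t, by simpa using ht⟩

theorem sqrt_hens (a z : ℤ_[p]) (h : ‖a - z ^ 2‖ < ‖2 * z‖ ^ 2) : ∃ w : ℤ_[p], w ^ 2 = a := by
  obtain ⟨t, ht⟩ := hens (z ^ 2 - a) (2 * z) 1 0 0 (by rwa [norm_sub_rev])
  exact ⟨z + t, by linear_combination ht⟩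

theorem norm_one_of_not_dvd {x : ℤ_[p]} (h : ¬ (p : ℤ_[p]) ∣ x) : ‖x‖ = 1 := by
  rw [← PadicInt.norm_lt_one_iff_dvd] at h
  exact le_antisymm (PadicInt.norm_le_one x) (not_lt.1 h)

theorem two_not_dvd (hp : p ≠ 2) : ¬ (p : ℤ_[p]) ∣ 2 := by
  intro h
  have hpp : p.Prime := Fact.out
  rw [← PadicInt.norm_lt_one_iff_dvd] at h
  have := (PadicInt.norm_int_lt_one_iff_dvd (p := p) 2).1 (by simpa using h)
  have h2 : p ∣ 2 := by exact_mod_cast this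
  exact hp ((Nat.prime_dvd_prime_iff_eq hpp Nat.prime_two).1 h2)

/-- simple root at `(1, t)` -/
theorem sol_simple (f : BQ ℤ_[p]) (h : ¬ (p : ℤ_[p]) ∣ f.b) (w : ℤ_[p]) (ha : (p : ℤ_[p]) ∣ f.a - w ^ 2) :
    SolubleP f := by
  obtain ⟨t, ht⟩ := hens (f.a - w ^ 2) f.b f.c f.d f.e (by
    rw [norm_one_of_not_dvd h, one_pow]
    exact (PadicInt.norm_lt_one_iff_dvd _).2 ha)
  exact soluble_of_int f 1 t w (by simp) (by simp only [BQ.eval]; linear_combination -ht)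

theorem sol_unit (hp : p ≠ 2) (f : BQ ℤ_[p]) (w : ℤ_[p]) (hw : ¬ (p : ℤ_[p]) ∣ w)
    (ha : (p : ℤ_[p]) ∣ f.a - w ^ 2) : SolubleP f := by
  obtain ⟨z, hz⟩ := sqrt_hens f.a w (by
    rw [norm_mul, norm_one_of_not_dvd hw, norm_one_of_not_dvd (two_not_dvd hp)]
    simpa using (PadicInt.norm_lt_one_iff_dvd _).2 ha)
  exact soluble_of_int f 1 0 z (by simp) (by simp [BQ.eval, hz])

theorem toZMod_eq_zero (x : ℤ_[p]) : PadicInt.toZMod x = 0 ↔ (p : ℤ_[p]) ∣ x := by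
  rw [← RingHom.mem_ker, PadicInt.ker_toZMod, PadicInt.maximalIdeal_eq_span_p,
    Ideal.mem_span_singleton]

theorem toZMod_lift (x : ZMod p) : ∃ y : ℤ_[p], PadicInt.toZMod y = x :=
  ZMod.ringHom_surjective _ x

theorem conic (hp : p ≠ 2) (f : BQ ℤ_[p]) (hf : ¬ SolubleP f) (ha : (p : ℤ_[p]) ∣ f.a)
    (hb : (p : ℤ_[p]) ∣ f.b) :
    ((p : ℤ_[p]) ∣ f.c ∨ (p : ℤ_[p]) ∣ f.d ^ 2 - 4 * f.c * f.e) ∧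
    ((p : ℤ_[p]) ∣ f.c → (p : ℤ_[p]) ∣ f.d) := by
  have hpp : p.Prime := Fact.out
  have hP : Prime (p : ℤ_[p]) := PadicInt.prime_p
  obtain ⟨a, b, c, d, e⟩ := f
  dsimp only at *
  obtain ⟨a, rfl⟩ := ha
  obtain ⟨b, rfl⟩ := hb
  have hs : ∀ t, ¬ SolubleP (shear t (rev (⟨p * a, p * b, c, d, e⟩ : BQ ℤ_[p]))) :=
    fun t h => hf (rev_sol _ (shear_sol t _ h))
  constructor
  · by_contra! hcon
    obtain ⟨hc, hE⟩ := hcon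
    obtain ⟨x, w, hxw⟩ : ∃ x w : ℤ_[p], (p : ℤ_[p]) ∣ c * x ^ 2 + d * x + e - w ^ 2 := by
      have hc' : (PadicInt.toZMod c) ≠ 0 := fun h => hc ((toZMod_eq_zero _).1 h)
      open Polynomial in
      obtain ⟨x, w, hxw⟩ := FiniteField.exists_root_sum_quadratic (R := ZMod p)
        (f := C (PadicInt.toZMod c) * X ^ 2 + C (PadicInt.toZMod d) * X + C (PadicInt.toZMod e))
        (g := C (-1) * X ^ 2 + C 0 * X + C 0)
        (degree_quadratic hc') (degree_quadratic (by simp)) (by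
          rw [ZMod.card]; exact hpp.eq_two_or_odd.resolve_left hp)
      obtain ⟨x, rfl⟩ := toZMod_lift x
      obtain ⟨w, rfl⟩ := toZMod_lift w
      refine ⟨x, w, ?_⟩
      rw [← toZMod_eq_zero]
      simp at hxw
      simp only [map_add, map_sub, map_mul, map_pow]
      linear_combination hxw
    have hv : (p : ℤ_[p]) ∣ (shear x (rev ⟨p * a, p * b, c, d, e⟩)).a - w ^ 2 := by
      obtain ⟨u, hu⟩ := hxw
      refine ⟨u + b * x ^ 3 + a * x ^ 4, ?_⟩
      simp only [shear, rev]
      linear_combination hu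
    by_cases hw : (p : ℤ_[p]) ∣ w
    · apply hs x
      refine sol_simple _ ?_ w hv
      intro h
      apply hE
      simp only [shear, rev] at h
      have h1 : (p : ℤ_[p]) ∣ d + 2 * c * x := by
        obtain ⟨u, hu⟩ := h
        exact ⟨u - 3 * b * x ^ 2 - 4 * a * x ^ 3, by linear_combination hu⟩
      have h2 : (p : ℤ_[p]) ∣ c * x ^ 2 + d * x + e := by
        have := dvd_add hxw (hw.mul_right w)
        ring_nf at this ⊢; exact this
      have := dvd_sub (h1.mul_left (d + 2 * c * x)) (h2.mul_left (4 * c))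
      ring_nf at this ⊢; exact this
    · exact hs x (sol_unit hp _ w hw hv)
  · rintro ⟨c, rfl⟩
    by_contra hd
    have hu : IsUnit d := by
      rw [PadicInt.isUnit_iff]; exact norm_one_of_not_dvd hd
    obtain ⟨d', hd'⟩ := hu.exists_right_inv
    apply hs (-(e * d'))
    refine sol_simple _ ?_ 0 ?_
    · simp only [shear, rev]
      intro h
      apply hd
      obtain ⟨u, hu⟩ := h
      exact ⟨u - 2 * c * (-(e * d')) - 3 * b * (-(e * d')) ^ 2 - 4 * a * (-(e * d')) ^ 3, by
        linear_combination hu⟩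
    · simp only [shear, rev]
      exact ⟨c * (-(e * d')) ^ 2 + b * (-(e * d')) ^ 3 + a * (-(e * d')) ^ 4, by
        linear_combination -e * hd'⟩

/-- the case `k = 0`, `p` odd -/
theorem odd_zero (hp : p ≠ 2) (f : BQ ℤ_[p]) (hf : ¬ SolubleP f) : (p : ℤ_[p]) ^ 2 ∣ f.disc := by
  have key : ∀ f : BQ ℤ_[p], ¬ SolubleP f → (p : ℤ_[p]) ∣ f.a → (p : ℤ_[p]) ^ 2 ∣ f.disc := by
    intro f hf ha
    have hb : (p : ℤ_[p]) ∣ f.b := by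
      by_contra hb
      exact hf (sol_simple f hb 0 (by simpa using ha))
    obtain ⟨h, -⟩ := conic hp f hf ha hb
    obtain ⟨a, b, c, d, e⟩ := f
    dsimp only at *
    obtain ⟨a, rfl⟩ := ha
    obtain ⟨b, rfl⟩ := hb
    have hW : ∀ q a b : ℤ_[p], (⟨q * a, q * b, c, d, e⟩ : BQ ℤ_[p]).disc =
        q * (-4 * a * c ^ 3 * (d ^ 2 - 4 * c * e)) + q ^ 2 * (
          256 * q * a ^ 3 * e ^ 3 * 1 * q ^ 0 - 192 * q * a ^ 2 * b * d * e ^ 2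
    - 128 * a ^ 2 * c ^ 2 * e ^ 2 + 144 * a ^ 2 * c * d ^ 2 * e
    - 27 * a ^ 2 * d ^ 4 + 144 * q * a * b ^ 2 * c * e ^ 2
    - 6 * q * a * b ^ 2 * d ^ 2 * e - 80 * a * b * c ^ 2 * d * e
    + 18 * a * b * c * d ^ 3
    - 27 * q ^ 2 * b ^ 4 * e ^ 2
    + 18 * q * b ^ 3 * c * d * e - 4 * q * b ^ 3 * d ^ 3
    - 4 * b ^ 2 * c ^ 3 * e + b ^ 2 * c ^ 2 * d ^ 2) := by
      intro q a b; simp only [BQ.disc]; ring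
    rw [hW]
    refine dvd_add ?_ (dvd_mul_right _ _)
    rw [pow_two]
    apply mul_dvd_mul_left
    rcases h with h | h
    · exact ((h.trans (dvd_pow_self c three_ne_zero)).mul_left _).mul_right _
    · exact h.mul_left _
  by_cases h1 : ∃ t, (p : ℤ_[p]) ∣ (shear t f).a
  · obtain ⟨t, ht⟩ := h1
    rw [← shear_disc t f]
    exact key _ (fun h => hf (shear_sol _ _ h)) ht
  by_cases h2 : (p : ℤ_[p]) ∣ f.e
  · rw [← rev_disc f]
    exact key _ (fun h => hf (rev_sol _ h)) h2
  push Not at h1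
  have hu : IsUnit (4 * f.e) := by
    rw [PadicInt.isUnit_iff, norm_mul, norm_one_of_not_dvd h2]
    have : (4 : ℤ_[p]) = 2 * 2 := by norm_num
    rw [this, norm_mul, norm_one_of_not_dvd (two_not_dvd hp)]; norm_num
  obtain ⟨u, hu⟩ := hu.exists_right_inv
  set t := - (f.d * u) with ht
  have hd : (shear t f).d = 0 := by
    simp only [shear]
    linear_combination -f.d * hu
  have hs : ∀ s, ¬ SolubleP (shear s (shear t f)) :=
    fun s h => hf (shear_sol _ _ (shear_sol _ _ h))
  have hr : ¬ SolubleP (rev f) := fun h => hf (rev_sol _ h)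
  have hv : ∀ s, ¬ (p : ℤ_[p]) ∣ (shear s (shear t f)).a := by
    intro s
    have : (shear s (shear t f)).a = (shear (s + t) f).a := by simp only [shear]; ring
    rw [this]; exact h1 _
  have he : (shear t f).e = f.e := rfl
  have nsq : ∀ g : BQ ℤ_[p], ¬ SolubleP g → ¬ (p : ℤ_[p]) ∣ g.a → ¬ IsSquare (PadicInt.toZMod g.a) := by
    rintro g hg hga ⟨w, hw⟩
    obtain ⟨w, rfl⟩ := toZMod_lift w
    have hd : (p : ℤ_[p]) ∣ g.a - w ^ 2 := by
      rw [← toZMod_eq_zero, map_sub, map_pow, hw]; ring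
    refine hg (sol_unit hp g w (fun h => hga ?_) hd)
    have := dvd_add hd (h.mul_right w)
    ring_nf at this; exact this
  have hdisc := shear_disc t f
  rw [← hdisc]
  rw [← he] at h2
  have hre : ¬ IsSquare (PadicInt.toZMod (shear t f).e) := nsq (rev f) hr h2
  clear_value t
  generalize shear t f = F at *
  obtain ⟨a, b, c, d, e⟩ := F
  dsimp only at *
  subst hd
  obtain ⟨k1, k2⟩ := hasse_all hp (PadicInt.toZMod a) (PadicInt.toZMod b) (PadicInt.toZMod c)
    (PadicInt.toZMod e) hre (by
      intro x
      obtain ⟨x, rfl⟩ := toZMod_lift x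
      have := nsq _ (hs x) (hv x)
      simp only [shear] at this
      convert this using 2
      simp only [map_add, map_mul, map_pow, map_zero]
      ring)
  rw [toZMod_eq_zero] at k1
  have k3 : (p : ℤ_[p]) ∣ 4 * a * e - c ^ 2 := by
    rw [← toZMod_eq_zero]
    simp only [map_sub, map_mul, map_pow, map_ofNat]
    rw [k2, sub_self]
  have : (⟨a, b, c, 0, e⟩ : BQ ℤ_[p]).disc = (4 * a * e - c ^ 2) ^ 2 * (16 * a * e)
      + b ^ 2 * (144 * a * c * e ^ 2 - 27 * b ^ 2 * e ^ 2 - 4 * c ^ 3 * e) := by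
    simp only [BQ.disc]; ring
  rw [this]
  exact dvd_add ((pow_dvd_pow_of_dvd k3 2).mul_right _) ((pow_dvd_pow_of_dvd k1 2).mul_right _)

theorem reduce (N : ℕ) (f f₀ : BQ ℤ_[p]) (hf : ¬ SolubleP f) (h0 : SolubleP f₀)
    (hc : CongMod N f f₀) :
    ∃ g : BQ ℤ_[p], ¬ SolubleP g ∧ g.disc = f.disc ∧ ∃ z, (p : ℤ_[p]) ^ N ∣ g.a - z ^ 2 := by
  obtain ⟨⟨ua, ha⟩, ⟨ub, hb⟩, ⟨uc, hc⟩, ⟨ud, hd⟩, ⟨ue, he⟩⟩ := hc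
  rcases int_of_soluble _ h0 with ⟨t, z, h⟩ | ⟨t, z, h⟩
  · refine ⟨shear t f, fun h => hf (shear_sol _ _ h), shear_disc _ _, z,
      ua + ub * t + uc * t ^ 2 + ud * t ^ 3 + ue * t ^ 4, ?_⟩
    simp only [BQ.eval] at h
    simp only [shear]
    linear_combination -h + ha + t * hb + t ^ 2 * hc + t ^ 3 * hd + t ^ 4 * he
  · refine ⟨shear t (rev f), fun h => hf (rev_sol _ (shear_sol _ _ h)),
      (shear_disc _ _).trans (rev_disc _), z,
      ue + ud * t + uc * t ^ 2 + ub * t ^ 3 + ua * t ^ 4, ?_⟩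
    simp only [BQ.eval] at h
    simp only [shear, rev]
    linear_combination -h + he + t * hd + t ^ 2 * hc + t ^ 3 * hb + t ^ 4 * ha

theorem norm_le_pow (x : ℤ_[p]) (n : ℕ) : ‖x‖ ≤ ((p : ℝ)⁻¹) ^ n ↔ (p : ℤ_[p]) ^ n ∣ x := by
  rw [← Ideal.mem_span_singleton, ← PadicInt.norm_le_pow_iff_mem_span_pow]
  simp

theorem reduce2 (N k : ℕ) (hN : ((p : ℝ)⁻¹) ^ N ≤ ‖(2 : ℤ_[p])‖ ^ 2 * ((p : ℝ)⁻¹) ^ (2 * k))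
    (hN2 : 2 * k ≤ N)
    (f f₀ : BQ ℤ_[p]) (hf : ¬ SolubleP f) (h0 : SolubleP f₀) (hc : CongMod N f f₀) :
    ∃ a b c d e : ℤ_[p], ¬ SolubleP (⟨((p : ℤ_[p]) ^ k) ^ 2 * a, (p : ℤ_[p]) ^ k * b, c, d, e⟩ : BQ ℤ_[p]) ∧
      (⟨((p : ℤ_[p]) ^ k) ^ 2 * a, (p : ℤ_[p]) ^ k * b, c, d, e⟩ : BQ ℤ_[p]).disc = f.disc := by
  have hpp : p.Prime := Fact.out
  have hpos : (0 : ℝ) < ((p : ℝ)⁻¹) ^ k := by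
    have : (0 : ℝ) < p := by exact_mod_cast hpp.pos
    positivity
  obtain ⟨g, hg, hgd, z, hz⟩ := reduce N f f₀ hf h0 hc
  have hzk : (p : ℤ_[p]) ^ k ∣ z := by
    by_contra hcon
    rw [← norm_le_pow, not_le] at hcon
    rw [← norm_le_pow] at hz
    obtain ⟨w, hw⟩ := sqrt_hens g.a z (by
      refine (hz.trans hN).trans_lt ?_
      rw [norm_mul, mul_pow, mul_comm 2 k, pow_mul]
      have h2 : 0 < ‖(2 : ℤ_[p])‖ := norm_pos_iff.2 two_ne_zero
      gcongr)
    exact hg (soluble_of_int g 1 0 w (by simp) (by simp [BQ.eval, hw]))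
  have hak : ((p : ℤ_[p]) ^ k) ^ 2 ∣ g.a := by
    have h1 : ((p : ℤ_[p]) ^ k) ^ 2 ∣ g.a - z ^ 2 := by
      rw [← pow_mul, mul_comm k 2]; exact (pow_dvd_pow _ hN2).trans hz
    have := dvd_add h1 (pow_dvd_pow_of_dvd hzk 2)
    simpa using this
  have hbk : (p : ℤ_[p]) ^ k ∣ g.b := by
    by_contra hcon
    rw [← norm_le_pow, not_le] at hcon
    rw [← pow_mul, ← norm_le_pow, pow_mul] at hak
    obtain ⟨t, ht⟩ := hens g.a g.b g.c g.d g.e (by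
      refine hak.trans_lt ?_
      gcongr)
    exact hg (soluble_of_int g 1 t 0 (by simp) (by simp only [BQ.eval]; linear_combination -ht))
  obtain ⟨a, b, c, d, e⟩ := g
  dsimp only at *
  obtain ⟨a, rfl⟩ := hak
  obtain ⟨b, rfl⟩ := hbk
  exact ⟨a, b, c, d, e, hg, hgd⟩

theorem disc_expand {R : Type*} [CommRing R] (q a b c d e : R) : (⟨q ^ 2 * a, q * b, c, d, e⟩ : BQ R).disc =
    q ^ 2 * (c ^ 2 * (b ^ 2 - 4 * c * a) * (d ^ 2 - 4 * c * e)
      + q * (b * (d * ((b ^ 2 - 4 * c * a) * (-4 * d ^ 2 + 18 * c * e)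
        + 2 * (a * c * (d ^ 2 - 4 * c * e)))))
      + q ^ 2 * (256 * q ^ 2 * a ^ 3 * e ^ 3 - 192 * q * a ^ 2 * b * d * e ^ 2
        - 128 * a ^ 2 * c ^ 2 * e ^ 2 + 144 * a ^ 2 * c * d ^ 2 * e - 27 * a ^ 2 * d ^ 4
        + 144 * a * b ^ 2 * c * e ^ 2 - 6 * a * b ^ 2 * d ^ 2 * e - 27 * b ^ 4 * e ^ 2)) := by
  simp only [BQ.disc]; ring

theorem odd_pos (hp : p ≠ 2) (k : ℕ) (a b c d e : ℤ_[p])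
    (hf : ¬ SolubleP (⟨((p : ℤ_[p]) ^ (k + 1)) ^ 2 * a, (p : ℤ_[p]) ^ (k + 1) * b, c, d, e⟩ : BQ ℤ_[p])) :
    (p : ℤ_[p]) ^ (2 * (k + 1) + 2) ∣
      (⟨((p : ℤ_[p]) ^ (k + 1)) ^ 2 * a, (p : ℤ_[p]) ^ (k + 1) * b, c, d, e⟩ : BQ ℤ_[p]).disc := by
  have hq : (p : ℤ_[p]) ∣ (p : ℤ_[p]) ^ (k + 1) := dvd_pow_self _ (by omega)
  have hq0 : (p : ℤ_[p]) ^ (k + 1) ≠ 0 := pow_ne_zero _ (PadicInt.prime_p).ne_zero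
  rw [disc_expand, pow_add, mul_comm 2 (k + 1), pow_mul]
  generalize (p : ℤ_[p]) ^ (k + 1) = q at *
  apply mul_dvd_mul_left
  obtain ⟨h1, h2⟩ := conic hp _ hf ((hq.trans (dvd_pow_self q two_ne_zero)).mul_right a) (hq.mul_right b)
  have hg : ¬ SolubleP (⟨q ^ 2 * e, q * d, c, b, a⟩ : BQ ℤ_[p]) := by
    intro h
    apply hf
    rcases int_of_soluble _ h with ⟨t, z, h⟩ | ⟨t, z, h⟩
    · refine soluble_of_int _ t q (q * z) (fun h => hq0 h.2) ?_
      simp only [BQ.eval] at h ⊢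
      linear_combination q ^ 2 * h
    · refine soluble_of_int _ 1 (q * t) (q * z) (by simp) ?_
      simp only [BQ.eval] at h ⊢
      linear_combination q ^ 2 * h
  obtain ⟨h3, h4⟩ := conic hp _ hg ((hq.trans (dvd_pow_self q two_ne_zero)).mul_right e) (hq.mul_right d)
  dsimp only at h1 h2 h3 h4
  refine dvd_add (dvd_add ?_ ?_) ((pow_dvd_pow_of_dvd hq 2).mul_right _)
  · by_cases hc : (p : ℤ_[p]) ∣ c
    · exact ((pow_dvd_pow_of_dvd hc 2).mul_right _).mul_right _
    · rw [pow_two, mul_assoc]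
      exact (mul_dvd_mul (h3.resolve_left hc) (h1.resolve_left hc)).mul_left _
  · rw [pow_two]
    apply mul_dvd_mul hq
    by_cases hc : (p : ℤ_[p]) ∣ c
    · exact (h4 hc).mul_right _
    · refine Dvd.dvd.mul_left (Dvd.dvd.mul_left (dvd_add ((h3.resolve_left hc).mul_right _) ?_) _) _
      exact ((h1.resolve_left hc).mul_left _).mul_left _

theorem two_cases (a : ℤ_[(2 : ℕ)]) : ∃ w : ℤ_[(2 : ℕ)], ((2 : ℕ) : ℤ_[(2 : ℕ)]) ∣ a - w ^ 2 := by
  have : ∀ x : ZMod 2, x - x ^ 2 = 0 := by decide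
  refine ⟨a, ?_⟩
  rw [← toZMod_eq_zero, map_sub, map_pow]
  exact this _

theorem even_b (f : BQ ℤ_[(2 : ℕ)]) (hf : ¬ SolubleP f) : (2 : ℤ_[(2 : ℕ)]) ∣ f.b := by
  by_contra h
  obtain ⟨w, hw⟩ := two_cases f.a
  exact hf (sol_simple f (by simpa using h) w hw)

theorem even_case (k : ℕ) (a b c d e : ℤ_[(2 : ℕ)])
    (hf : ¬ SolubleP (⟨((2 : ℤ_[(2 : ℕ)]) ^ k) ^ 2 * a, (2 : ℤ_[(2 : ℕ)]) ^ k * b, c, d, e⟩ : BQ ℤ_[(2 : ℕ)])) :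
    (2 : ℤ_[(2 : ℕ)]) ^ (2 * k + 2) ∣
      (⟨((2 : ℤ_[(2 : ℕ)]) ^ k) ^ 2 * a, (2 : ℤ_[(2 : ℕ)]) ^ k * b, c, d, e⟩ : BQ ℤ_[(2 : ℕ)]).disc := by
  have hd : (2 : ℤ_[(2 : ℕ)]) ∣ d := even_b (rev _) (fun h => hf (rev_sol _ h))
  have hb := even_b _ hf
  dsimp only at hb
  rw [disc_expand, pow_add, mul_comm 2 k, pow_mul]
  apply mul_dvd_mul_left
  obtain ⟨d, rfl⟩ := hd
  have hE : (2 : ℤ_[(2 : ℕ)]) ^ 2 ∣ (2 * d) ^ 2 - 4 * c * e := ⟨d ^ 2 - c * e, by ring⟩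
  rcases k with _ | k
  · rw [pow_zero, one_mul] at hb
    obtain ⟨b, rfl⟩ := hb
    refine dvd_add (dvd_add (hE.mul_left _) ?_) ?_
    · rw [pow_zero, one_mul, mul_assoc 2 b, pow_two]
      apply mul_dvd_mul_left
      apply Dvd.dvd.mul_left
      rw [mul_assoc]
      exact dvd_mul_right _ _
    · simp only [pow_zero, one_pow, one_mul, mul_one]
      exact ⟨64 * a ^ 3 * e ^ 3 - 192 * a ^ 2 * b * d * e ^ 2
        - 32 * a ^ 2 * c ^ 2 * e ^ 2 + 144 * a ^ 2 * c * d ^ 2 * e - 27 * 4 * a ^ 2 * d ^ 4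
        + 144 * a * b ^ 2 * c * e ^ 2 - 24 * a * b ^ 2 * d ^ 2 * e - 27 * 4 * b ^ 4 * e ^ 2, by ring⟩
  · have hq : (2 : ℤ_[(2 : ℕ)]) ∣ 2 ^ (k + 1) := dvd_pow_self _ (by omega)
    refine dvd_add (dvd_add (hE.mul_left _) ?_) ((pow_dvd_pow_of_dvd hq 2).mul_right _)
    rw [pow_two]
    apply mul_dvd_mul hq
    apply Dvd.dvd.mul_left
    rw [mul_assoc]
    exact dvd_mul_right _ _

/-- Insoluble forms congruent to soluble ones have highly divisible
discriminant. -/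
theorem insoluble_near_soluble_disc (k : ℕ) :
    (∀ (p' : ℕ) [Fact p'.Prime], p' ≠ 2 →
      ∀ f f₀ : BQ ℤ_[p'], ¬ SolubleP f → SolubleP f₀ → CongMod (2 * k) f f₀ →
        (p' : ℤ_[p']) ^ (2 * k + 2) ∣ f.disc) ∧
    (∀ f f₀ : BQ ℤ_[(2 : ℕ)], ¬ SolubleP f → SolubleP f₀ → CongMod (2 * k + 2) f f₀ →
        (2 : ℤ_[(2 : ℕ)]) ^ (2 * k + 2) ∣ f.disc) := by
  constructor
  · intro p' _ hp f f₀ hf h0 hc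
    rcases k with _ | k
    · simpa using odd_zero hp f hf
    · obtain ⟨a, b, c, d, e, hg, hgd⟩ := reduce2 (2 * (k + 1)) (k + 1) (by
        rw [norm_one_of_not_dvd (two_not_dvd hp)]; simp) le_rfl f f₀ hf h0 hc
      rw [← hgd]
      exact odd_pos hp k a b c d e hg
  · intro f f₀ hf h0 hc
    obtain ⟨a, b, c, d, e, hg, hgd⟩ := reduce2 (2 * k + 2) k (by
      have : ‖(2 : ℤ_[(2 : ℕ)])‖ = (2 : ℝ)⁻¹ := by
        simpa using PadicInt.norm_p (p := 2)
      rw [this]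
      push_cast
      rw [pow_add, mul_comm]) (by omega) f f₀ hf h0 hc
    rw [← hgd]
    exact even_case k a b c d e hg

end BQPaper
end
end

section
/- There is an absolute constant C such that for every prime p, denoting by ν the Haar probability measure on V(ℤ_p) ≅ ℤ_p⁵: ν({f ∈ V(ℤ_p) : p² ∣ Δ(f)}) ≤ C p^{−2}; ν({f ∈ V(ℤ_p) : p⁴ ∣ Δ(f)}) ≤ C p^{−4}; and for every integer k ≥ 3, ν({f ∈ V(ℤ_p) : p^{2k} ∣ Δ(f)}) ≤ C k p^{−3k/2}. -/
noncomputable section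

namespace BQPaper

open MeasureTheory

instance (p : Nat.Primes) : Fact (p : ℕ).Prime := ⟨p.2⟩

noncomputable instance (p : ℕ) [Fact p.Prime] : MeasurableSpace ℤ_[p] := borel _
instance (p : ℕ) [Fact p.Prime] : BorelSpace ℤ_[p] := ⟨rfl⟩

/-- View a vector of coefficients as a binary quartic form. -/
def ofVec {R : Type*} (v : Fin 5 → R) : BQ R := ⟨v 0, v 1, v 2, v 3, v 4⟩

/-- The set of binary quartic forms over `ℤ_p` whose discriminant is divisible
by `p^j`. -/
def discDivSet (p : Nat.Primes) (j : ℕ) : Set (Fin 5 → ℤ_[(p : ℕ)]) :=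
  {v | ((p : ℕ) : ℤ_[(p : ℕ)]) ^ j ∣ (ofVec v).disc}

lemma scale_aux {G : Type*} [AddCommGroup G] [TopologicalSpace G] [IsTopologicalAddGroup G]
    [CompactSpace G] [T2Space G] [MeasurableSpace G] [BorelSpace G]
    (ν : Measure G) [IsProbabilityMeasure ν] [ν.IsAddLeftInvariant]
    (φ : G →+ G) (hc : Continuous φ) (hi : Function.Injective φ) (S : Set G) :
    ν (φ '' S) = ν (Set.range φ) * ν S := by
  have hE : MeasurableEmbedding φ := (hc.isClosedEmbedding hi).measurableEmbedding
  have : ν.IsAddHaarMeasure := Measure.isAddHaarMeasure_of_isCompact_nonempty_interior ν Set.univ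
    isCompact_univ (by simp) (by simp) (by simp)
  have : (Measure.comap φ ν).IsAddLeftInvariant := by
    constructor
    intro g
    ext T hT
    rw [Measure.map_apply (measurable_const_add g) hT, hE.comap_apply, hE.comap_apply]
    have : φ '' ((fun x => g + x) ⁻¹' T) = (fun x => φ g + x) ⁻¹' (φ '' T) := by
      ext y
      constructor
      · rintro ⟨x, hx, rfl⟩
        exact ⟨g + x, hx, by simp⟩
      · rintro ⟨x, hx, hxy⟩
        refine ⟨x - g, by simpa using hx, ?_⟩
        simp only [map_sub, hxy]; abel
    rw [this, measure_preimage_add]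
  have : IsFiniteMeasure (Measure.comap φ ν) := ⟨by
    rw [hE.comap_apply]; exact measure_lt_top _ _⟩
  have key := Measure.isAddInvariant_eq_smul_of_compactSpace (Measure.comap φ ν) ν
  have h1 := congrArg (fun m : Measure G => m Set.univ) key
  have h2 := congrArg (fun m : Measure G => m S) key
  simp only [hE.comap_apply, Measure.smul_apply, measure_univ, Set.image_univ] at h1 h2
  rw [h2, h1, ENNReal.smul_def, ENNReal.smul_def]
  simp

lemma uniq_aux {G : Type*} [AddCommGroup G] [TopologicalSpace G] [IsTopologicalAddGroup G]
    [CompactSpace G] [T2Space G] [MeasurableSpace G] [BorelSpace G]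
    (ν ν' : Measure G) [IsProbabilityMeasure ν] [ν.IsAddLeftInvariant]
    [IsProbabilityMeasure ν'] [ν'.IsAddLeftInvariant] : ν = ν' := by
  have : ν.IsAddHaarMeasure := Measure.isAddHaarMeasure_of_isCompact_nonempty_interior ν Set.univ
    isCompact_univ (by simp) (by simp) (by simp)
  have : ν'.IsAddHaarMeasure := Measure.isAddHaarMeasure_of_isCompact_nonempty_interior ν' Set.univ
    isCompact_univ (by simp) (by simp) (by simp)
  exact Measure.isAddHaarMeasure_eq_of_isProbabilityMeasure ν ν'

section padic

variable (p : ℕ) [hp : Fact p.Prime]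

/-- `p^{-1/2}`. -/
def uu : ℝ := (Real.sqrt p)⁻¹

lemma uu_pos : 0 < uu p := by
  have := hp.out.pos
  unfold uu; positivity

lemma uu_sq : uu p ^ 2 = (p : ℝ)⁻¹ := by
  unfold uu; rw [inv_pow, Real.sq_sqrt (by positivity)]

lemma uu_le : uu p ≤ 3 / 4 := by
  have h2 : (2 : ℝ) ≤ p := by exact_mod_cast hp.out.two_le
  have h := uu_sq p
  have h3 : (p : ℝ)⁻¹ ≤ 1 / 2 := by
    rw [inv_le_comm₀ (by positivity) (by positivity)]; norm_num; exact_mod_cast h2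
  nlinarith [uu_pos p]

lemma uu_pow (n : ℕ) : uu p ^ (2 * n) = (p : ℝ) ^ (-n : ℤ) := by
  rw [pow_mul, uu_sq]; simp

variable {p}

lemma norm_cases {x : ℤ_[p]} (hx : x ≠ 0) : ∃ n : ℕ, ‖x‖ = uu p ^ (2 * n) :=
  ⟨x.valuation, by rw [uu_pow]; exact PadicInt.norm_eq_zpow_neg_valuation hx⟩

lemma norm_le_uu (x : ℤ_[p]) (n : ℕ) : ‖x‖ ≤ uu p ^ (2 * n) ↔ (p : ℤ_[p]) ^ n ∣ x := by
  rw [uu_pow, PadicInt.norm_le_pow_iff_mem_span_pow, Ideal.mem_span_singleton]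

lemma uu_anti {m n : ℕ} (h : m ≤ n) : uu p ^ n ≤ uu p ^ m :=
  pow_le_pow_of_le_one (uu_pos p).le ((uu_le p).trans (by norm_num)) h

lemma uu_le_iff {m n : ℕ} : uu p ^ n ≤ uu p ^ m ↔ m ≤ n :=
  pow_le_pow_iff_right_of_lt_one₀ (uu_pos p) ((uu_le p).trans_lt (by norm_num))

lemma norm_nat_ge (n : ℕ) (hn : n ≠ 0) : (1 : ℝ) / n ≤ ‖(n : ℤ_[p])‖ := by
  have hn' : (n : ℤ_[p]) ≠ 0 := by exact_mod_cast hn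
  have h1 := PadicInt.norm_eq_zpow_neg_valuation hn'
  have h2 : (p : ℤ_[p]) ^ (n : ℤ_[p]).valuation ∣ (n : ℤ_[p]) := by
    rw [← norm_le_uu, uu_pow, h1]
  have h3 : p ^ (n : ℤ_[p]).valuation ∣ n := by
    have := (PadicInt.norm_int_le_pow_iff_dvd (p := p) (k := n) (n := (n : ℤ_[p]).valuation)).1
      (by rw [← h1]; simp)
    exact_mod_cast this
  have h4 := Nat.le_of_dvd (Nat.pos_of_ne_zero hn) h3
  rw [h1, zpow_neg, zpow_natCast, one_div]
  apply inv_anti₀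
  · have := hp.out.pos; positivity
  · exact_mod_cast h4

variable (p)

/-- Haar probability measure on `ℤ_p`. -/
def hm : Measure ℤ_[p] := Measure.addHaarMeasure ⊤

instance : IsProbabilityMeasure (hm p) :=
  ⟨by simpa [hm] using Measure.addHaarMeasure_self (K₀ := (⊤ : TopologicalSpace.PositiveCompacts ℤ_[p]))⟩

instance : (hm p).IsAddLeftInvariant := by unfold hm; infer_instance

instance : SecondCountableTopology ℤ_[p] := inferInstance

lemma hm_pow (n : ℕ) : hm p {x | ‖x‖ ≤ uu p ^ (2 * n)} = ENNReal.ofReal (uu p ^ (2 * n)) := by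
  set H : AddSubgroup ℤ_[p] := (PadicInt.toZModPow n : ℤ_[p] →+* ZMod (p ^ n)).toAddMonoidHom.ker
    with hH
  have hHs : (H : Set ℤ_[p]) = {x | ‖x‖ ≤ uu p ^ (2 * n)} := by
    ext x
    have : x ∈ RingHom.ker (PadicInt.toZModPow n : ℤ_[p] →+* ZMod (p ^ n)) ↔
      x ∈ Ideal.span {(p : ℤ_[p]) ^ n} := by rw [PadicInt.ker_toZModPow]
    rw [Set.mem_ofPred_eq, norm_le_uu, ← Ideal.mem_span_singleton, ← this]
    rfl
  have hpn : p ^ n ≠ 0 := pow_ne_zero _ hp.out.ne_zero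
  have : NeZero (p ^ n) := ⟨hpn⟩
  have hidx : H.index = p ^ n := by
    rw [hH, AddSubgroup.index_ker, AddMonoidHom.range_eq_top.2]
    · simp
    · exact ZMod.ringHom_surjective _
  have : H.FiniteIndex := ⟨by rw [hidx]; exact hpn⟩
  have hm1 : MeasurableSet (H : Set ℤ_[p]) := by
    rw [hHs]; exact (isClosed_le continuous_norm continuous_const).measurableSet
  have := AddSubgroup.index_mul_measure H hm1 (hm p)
  rw [hidx, measure_univ, hHs] at this
  have h3 := ENNReal.eq_inv_of_mul_eq_one_left (by rw [mul_comm] at this; exact this)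
  rw [h3, pow_mul, uu_sq, inv_pow, ENNReal.ofReal_inv_of_pos]
  · congr 1
    rw [ENNReal.ofReal_pow (by positivity)]; simp
  · have := hp.out.pos; positivity

lemma hm_ball (x : ℤ_[p]) (ρ : ℝ) : hm p {y | ‖y - x‖ ≤ ρ} ≤ ENNReal.ofReal ρ := by
  have h0 : hm p {y | ‖y - x‖ ≤ ρ} = hm p {y | ‖y‖ ≤ ρ} := by
    have := measure_preimage_add (hm p) (-x) {y | ‖y‖ ≤ ρ}
    rw [← this]; congr 1; ext y; simp [sub_eq_add_neg, add_comm]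
  rw [h0]
  by_cases hρ : ρ < 0
  · have : {y : ℤ_[p] | ‖y‖ ≤ ρ} = ∅ := by
      ext y; simp; linarith [norm_nonneg y]
    simp [this]
  push Not at hρ
  by_cases h1 : 1 ≤ ρ
  · exact prob_le_one.trans (by simpa using h1)
  push Not at h1
  have hu1 : uu p ^ 2 < 1 := by have := uu_le p; have := uu_pos p; nlinarith
  rcases hρ.eq_or_lt with h | hρ
  · subst h
    refine le_of_forall_gt ?_
    intro ε hε
    rw [ENNReal.ofReal_zero] at hε
    have ht : Filter.Tendsto (fun n : ℕ => ENNReal.ofReal (uu p ^ (2 * n))) Filter.atTop (nhds 0) := by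
      have := tendsto_pow_atTop_nhds_zero_of_lt_one (sq_nonneg (uu p)) hu1
      simp only [pow_mul]
      simpa using ENNReal.tendsto_ofReal this
    obtain ⟨n, hn⟩ := (ht.eventually (gt_mem_nhds hε)).exists
    have : hm p {y | ‖y‖ ≤ 0} ≤ hm p {y | ‖y‖ ≤ uu p ^ (2 * n)} := by
      apply measure_mono
      intro y hy
      exact le_trans hy (pow_nonneg (uu_pos p).le _)
    rw [hm_pow] at this
    exact this.trans_lt hn
  · have hex : ∃ n : ℕ, uu p ^ (2 * n) ≤ ρ := by
      obtain ⟨n, hn⟩ := exists_pow_lt_of_lt_one hρ hu1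
      exact ⟨n, by rw [pow_mul]; exact hn.le⟩
    classical
    have hn1 := Nat.find_spec hex
    have hn2 := fun m => Nat.find_min hex (m := m)
    set n := Nat.find hex
    have : hm p {y | ‖y‖ ≤ ρ} ≤ hm p {y | ‖y‖ ≤ uu p ^ (2 * n)} := by
      apply measure_mono
      intro y hy
      rcases eq_or_ne y 0 with rfl | hy0
      · simp only [Set.mem_ofPred_eq, norm_zero]; exact pow_nonneg (uu_pos p).le _
      obtain ⟨m, hm⟩ := norm_cases hy0
      simp only [Set.mem_ofPred_eq, hm] at hy ⊢
      apply uu_anti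
      by_contra hlt
      exact hn2 m (by omega) hy
    rw [hm_pow] at this
    exact this.trans (ENNReal.ofReal_le_ofReal hn1)

lemma hm_affine (α β : ℤ_[p]) (hα : α ≠ 0) (S : Set ℤ_[p]) :
    hm p {x | α * x + β ∈ S} ≤ ENNReal.ofReal (‖α‖⁻¹) * hm p S := by
  have h := scale_aux (hm p) (AddMonoidHom.mulLeft α) (continuous_const.mul continuous_id)
    (fun x y h => mul_left_cancel₀ hα h) {x | α * x + β ∈ S}
  have hr : hm p (Set.range (AddMonoidHom.mulLeft α)) = ENNReal.ofReal ‖α‖ := by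
    obtain ⟨n, hn⟩ := norm_cases hα
    rw [hn, ← hm_pow]
    congr 1
    ext x
    simp only [Set.mem_range, AddMonoidHom.coe_mulLeft, Set.mem_ofPred_eq]
    constructor
    · rintro ⟨y, rfl⟩
      rw [norm_mul, ← hn]
      exact mul_le_of_le_one_right (norm_nonneg _) (PadicInt.norm_le_one _)
    · intro hx
      have h1 : ‖α‖ ≤ uu p ^ (2 * n) := hn.le
      have hn' : ‖x‖ ≤ ‖α‖ := by rw [hn]; exact hx
      have hd : α ∣ x := by
        rw [PadicInt.unitCoeff_spec hα, mul_comm]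
        refine (Units.mul_right_dvd).2 ?_
        rw [← norm_le_uu, uu_pow, ← PadicInt.norm_eq_zpow_neg_valuation hα]; exact hn'
      obtain ⟨y, hy⟩ := hd
      exact ⟨y, hy.symm⟩
  rw [hr] at h
  have h2 : hm p (AddMonoidHom.mulLeft α '' {x | α * x + β ∈ S}) ≤ hm p S := by
    rw [← measure_preimage_add (hm p) β S]
    apply measure_mono
    rintro _ ⟨x, hx, rfl⟩
    simp only [Set.mem_preimage, AddMonoidHom.coe_mulLeft]
    rw [add_comm]; exact hx
  have hpos : 0 < ‖α‖ := norm_pos_iff.2 hα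
  rw [h] at h2
  calc _ = ENNReal.ofReal (‖α‖⁻¹) * (ENNReal.ofReal ‖α‖ * hm p {x | α * x + β ∈ S}) := by
        rw [← mul_assoc, ← ENNReal.ofReal_mul (by positivity), inv_mul_cancel₀ hpos.ne']; simp
    _ ≤ _ := by gcongr

lemma lint_affine (α β : ℤ_[p]) (hα : α ≠ 0) (f : ℤ_[p] → ENNReal) (hf : Measurable f) :
    ∫⁻ x, f (α * x + β) ∂(hm p) ≤ ENNReal.ofReal (‖α‖⁻¹) * ∫⁻ x, f x ∂(hm p) := by
  have hmeas : Measurable (fun x : ℤ_[p] => α * x + β) :=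
    (by fun_prop : Continuous (fun x : ℤ_[p] => α * x + β)).measurable
  rw [← lintegral_map hf hmeas]
  have : Measure.map (fun x : ℤ_[p] => α * x + β) (hm p) ≤ ENNReal.ofReal (‖α‖⁻¹) • hm p := by
    refine Measure.le_iff.2 ?_
    intro S hS
    rw [Measure.map_apply hmeas hS]
    exact hm_affine p α β hα S
  calc _ ≤ _ := lintegral_mono' this le_rfl
    _ = _ := by rw [lintegral_smul_measure]; rfl

end padic


section padic2

variable {p : ℕ} [hp : Fact p.Prime]

lemma geo_aux (v : ℝ) (h0 : 0 < v) (h1 : v ≤ 3 / 4) (N : ℕ) :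
    ∑ t ∈ Finset.range N, 1 / v ^ t ≤ 4 * v / v ^ N := by
  induction N with
  | zero => simp; linarith
  | succ n ih =>
    rw [Finset.sum_range_succ]
    have : 4 * v / v ^ (n + 1) = 4 / v ^ n := by
      field_simp
      ring
    rw [this]
    refine (add_le_add_left ih _).trans ?_
    rw [← add_div]
    gcongr
    linarith

lemma geo_aux2 (v : ℝ) (h0 : 0 < v) (h1 : v ≤ 3 / 4) (T N : ℕ) :
    ∑ t ∈ Finset.range N, (if T < t then v ^ t else 0) ≤ 4 * (v ^ T - v ^ (max N T)) := by
  induction N with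
  | zero => simp
  | succ n ih =>
    rw [Finset.sum_range_succ]
    by_cases h : T < n
    · rw [if_pos h]
      rw [max_eq_left h.le] at ih
      rw [max_eq_left (by omega), pow_succ]
      have : 0 < v ^ n := by positivity
      nlinarith
    · rw [if_neg h]
      push Not at h
      rw [max_eq_right h] at ih
      have : v ^ max (n + 1) T ≤ v ^ T :=
        pow_le_pow_of_le_one h0.le (by linarith) (le_max_right _ _)
      linarith

lemma nrm_sub_le {x y : ℤ_[p]} {ε : ℝ} (hx : ‖x‖ ≤ ε) (hy : ‖y‖ ≤ ε) : ‖x - y‖ ≤ ε := by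
  rw [sub_eq_add_neg]
  exact (PadicInt.nonarchimedean _ _).trans (max_le hx (by rwa [norm_neg]))

lemma nrm_add_le {x y : ℤ_[p]} {ε : ℝ} (hx : ‖x‖ ≤ ε) (hy : ‖y‖ ≤ ε) : ‖x + y‖ ≤ ε :=
  (PadicInt.nonarchimedean _ _).trans (max_le hx hy)

lemma nrm_eq_of_sub_lt {x y : ℤ_[p]} (h : ‖x - y‖ < ‖y‖) : ‖x‖ = ‖y‖ := by
  have := PadicInt.norm_eq_of_norm_add_lt_right (z1 := x) (z2 := -y)
    (by rw [norm_neg, ← sub_eq_add_neg]; exact h)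
  rwa [norm_neg] at this

lemma sepr {x a : ℤ_[p]} {ε δ : ℝ} (h : ‖(x - a) * (x + a)‖ ≤ ε) (hδ : 0 < δ) (ha : δ ≤ ‖2 * a‖) :
    ‖x - a‖ ≤ ε / δ ∨ ‖x + a‖ ≤ ε / δ := by
  by_contra hcon
  push Not at hcon
  obtain ⟨h1, h2⟩ := hcon
  rw [norm_mul] at h
  have hε : 0 ≤ ε := le_trans (by positivity) h
  have h3 : 2 * a = (x + a) - (x - a) := by ring
  have h4 : δ ≤ ‖x + a‖ ∨ δ ≤ ‖x - a‖ := by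
    by_contra hc
    push Not at hc
    have : ‖2 * a‖ ≤ max ‖x + a‖ ‖x - a‖ := by
      rw [h3]; exact nrm_sub_le (le_max_left _ _) (le_max_right _ _)
    have := this.trans_lt (max_lt hc.1 hc.2)
    linarith
  rw [div_lt_iff₀ hδ] at h1 h2
  rcases h4 with h4 | h4
  · nlinarith [norm_nonneg (x - a), norm_nonneg (x + a)]
  · nlinarith [norm_nonneg (x - a), norm_nonneg (x + a)]

lemma norm_two_ge : (1 : ℝ) / 2 ≤ ‖(2 : ℤ_[p])‖ := by
  have := norm_nat_ge (p := p) 2 (by norm_num); exact_mod_cast this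

lemma sq1 (γ : ℤ_[p]) (ε : ℝ) (n : ℕ) (hγ : uu p ^ (2 * n) ≤ ‖γ‖) :
    hm p {r | ‖r ^ 2 - γ‖ ≤ ε} ≤ ENNReal.ofReal (4 * ε / uu p ^ n) := by
  have hu := uu_pos p
  have hun : 0 < uu p ^ n := by positivity
  rcases Set.eq_empty_or_nonempty {r | ‖r ^ 2 - γ‖ ≤ ε} with he | ⟨r0, hr0⟩
  · rw [he]; simp
  have hε : 0 ≤ ε := le_trans (norm_nonneg _) hr0
  simp only [Set.mem_ofPred_eq] at hr0
  rcases le_or_gt ‖γ‖ ε with hc | hc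
  · have : {r | ‖r ^ 2 - γ‖ ≤ ε} ⊆ {r | ‖r - 0‖ ≤ ε / uu p ^ n} := by
      intro r hr
      simp only [Set.mem_ofPred_eq] at hr ⊢
      have h1 : ‖r ^ 2‖ ≤ ε := by
        have := nrm_add_le hr hc; simpa using this
      rw [norm_pow] at h1
      rw [sub_zero, le_div_iff₀ hun]
      apply abs_le_of_sq_le_sq' _ hε |>.2
      rw [mul_pow, ← pow_mul, mul_comm n 2]
      calc ‖r‖ ^ 2 * uu p ^ (2 * n) ≤ ε * ε := by
            apply mul_le_mul h1 (hγ.trans hc) (by positivity) hε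
        _ = ε ^ 2 := by ring
    refine (measure_mono this).trans ((hm_ball p _ _).trans (ENNReal.ofReal_le_ofReal ?_))
    gcongr
    linarith
  · have h1 : ‖r0 ^ 2‖ = ‖γ‖ := nrm_eq_of_sub_lt (lt_of_le_of_lt hr0 hc)
    have h2 : uu p ^ n ≤ ‖r0‖ := by
      rw [norm_pow] at h1
      rw [← h1, mul_comm, pow_mul] at hγ
      exact (pow_le_pow_iff_left₀ hun.le (norm_nonneg _) (by norm_num)).1 hγ
    have h3 : uu p ^ n / 2 ≤ ‖2 * r0‖ := by
      rw [norm_mul]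
      have := norm_two_ge (p := p)
      nlinarith
    have : {r | ‖r ^ 2 - γ‖ ≤ ε} ⊆ {r | ‖r - r0‖ ≤ ε / (uu p ^ n / 2)} ∪
        {r | ‖r - (-r0)‖ ≤ ε / (uu p ^ n / 2)} := by
      intro r hr
      simp only [Set.mem_ofPred_eq] at hr
      have h4 : ‖(r - r0) * (r + r0)‖ ≤ ε := by
        have := nrm_sub_le hr hr0
        rwa [show r ^ 2 - γ - (r0 ^ 2 - γ) = (r - r0) * (r + r0) by ring] at this
      have := sepr h4 (by positivity) h3
      simpa using this
    refine (measure_mono this).trans ((measure_union_le _ _).trans ?_)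
    refine (add_le_add (hm_ball p _ _) (hm_ball p _ _)).trans ?_
    rw [← ENNReal.ofReal_add (by positivity) (by positivity)]
    apply ENNReal.ofReal_le_ofReal
    apply le_of_eq
    field_simp
    ring

lemma half_aux {x y : ℤ_[p]} {n : ℕ} (h : ‖x * y‖ ≤ uu p ^ (2 * n)) :
    ‖x‖ ≤ uu p ^ (2 * ((n + 1) / 2)) ∨ ‖y‖ ≤ uu p ^ (2 * ((n + 1) / 2)) := by
  have hu := uu_pos p
  rcases eq_or_ne x 0 with rfl | hx
  · left; rw [norm_zero]; positivity
  rcases eq_or_ne y 0 with rfl | hy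
  · right; rw [norm_zero]; positivity
  obtain ⟨a, ha⟩ := norm_cases hx
  obtain ⟨b, hb⟩ := norm_cases hy
  rw [norm_mul, ha, hb, ← pow_add, uu_le_iff] at h
  rw [ha, hb, uu_le_iff, uu_le_iff]
  omega

lemma cube_aux {x : ℤ_[p]} {n : ℕ} (h : ‖x ^ 3‖ ≤ uu p ^ (2 * n)) :
    ‖x‖ ≤ uu p ^ (2 * ((n + 2) / 3)) := by
  have hu := uu_pos p
  rcases eq_or_ne x 0 with rfl | hx
  · rw [norm_zero]; positivity
  obtain ⟨a, ha⟩ := norm_cases hx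
  rw [norm_pow, ha, ← pow_mul, uu_le_iff] at h
  rw [ha, uu_le_iff]
  omega

lemma sq2 (γ : ℤ_[p]) (n : ℕ) :
    hm p {r | ‖r ^ 2 - γ‖ ≤ uu p ^ (2 * n)} ≤ ENNReal.ofReal (2 * uu p ^ (2 * ((n + 1) / 2))) := by
  have hu := uu_pos p
  rcases Set.eq_empty_or_nonempty {r | ‖r ^ 2 - γ‖ ≤ uu p ^ (2 * n)} with he | ⟨r0, hr0⟩
  · rw [he]; simp
  simp only [Set.mem_ofPred_eq] at hr0
  have : {r | ‖r ^ 2 - γ‖ ≤ uu p ^ (2 * n)} ⊆ {r | ‖r - r0‖ ≤ uu p ^ (2 * ((n + 1) / 2))} ∪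
      {r | ‖r - (-r0)‖ ≤ uu p ^ (2 * ((n + 1) / 2))} := by
    intro r hr
    simp only [Set.mem_ofPred_eq] at hr
    have h4 : ‖(r - r0) * (r + r0)‖ ≤ uu p ^ (2 * n) := by
      have := nrm_sub_le hr hr0
      rwa [show r ^ 2 - γ - (r0 ^ 2 - γ) = (r - r0) * (r + r0) by ring] at this
    have := half_aux h4
    simpa using this
  refine (measure_mono this).trans ((measure_union_le _ _).trans ?_)
  refine (add_le_add (hm_ball p _ _) (hm_ball p _ _)).trans ?_
  rw [← ENNReal.ofReal_add (by positivity) (by positivity)]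
  apply ENNReal.ofReal_le_ofReal
  linarith

lemma shell (f : ℤ_[p] → ENNReal) (L : ℤ_[p] → ℤ_[p]) (hLc : Continuous L) (κ : ℝ) (hκ : 0 ≤ κ)
    (hL : ∀ t : ℕ, hm p {x | ‖L x‖ ≤ uu p ^ (2 * t)} ≤ ENNReal.ofReal (κ * uu p ^ (2 * t)))
    (N : ℕ) (F : ℕ → ℝ) (B : ℝ) (hF0 : ∀ t, 0 ≤ F t) (hB0 : 0 ≤ B)
    (hF : ∀ x t, t < N → ‖L x‖ = uu p ^ (2 * t) → f x ≤ ENNReal.ofReal (F t))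
    (hB : ∀ x, ‖L x‖ ≤ uu p ^ (2 * N) → f x ≤ ENNReal.ofReal B) :
    ∫⁻ x, f x ∂(hm p) ≤
      ENNReal.ofReal (κ * (∑ t ∈ Finset.range N, uu p ^ (2 * t) * F t + uu p ^ (2 * N) * B)) := by
  have hu := uu_pos p
  have hmeas : ∀ t : ℕ, MeasurableSet {x | ‖L x‖ ≤ uu p ^ (2 * t)} := fun t =>
    (isClosed_le hLc.norm continuous_const).measurableSet
  set g : ℤ_[p] → ENNReal := fun x =>
    ∑ t ∈ Finset.range N, ({x | ‖L x‖ ≤ uu p ^ (2 * t)}).indicator (fun _ => ENNReal.ofReal (F t)) x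
      + ({x | ‖L x‖ ≤ uu p ^ (2 * N)}).indicator (fun _ => ENNReal.ofReal B) x with hg
  have hfg : ∀ x, f x ≤ g x := by
    intro x
    by_cases hx : ‖L x‖ ≤ uu p ^ (2 * N)
    · refine (hB x hx).trans ?_
      refine le_trans ?_ le_add_self
      rw [Set.indicator_of_mem (by exact hx)]
    · have hx0 : L x ≠ 0 := by
        intro h0; apply hx; rw [h0, norm_zero]; positivity
      obtain ⟨t, ht⟩ := norm_cases hx0
      have htN : t < N := by
        by_contra hcon
        apply hx; rw [ht]; exact uu_anti (by omega)
      refine (hF x t htN ht).trans ?_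
      refine le_trans ?_ le_self_add
      refine le_trans ?_ (Finset.single_le_sum (fun _ _ => zero_le) (Finset.mem_range.2 htN))
      rw [Set.indicator_of_mem (by exact ht.le)]
  refine (lintegral_mono hfg).trans ?_
  rw [hg, lintegral_add_right _ (measurable_const.indicator (hmeas N)),
    lintegral_finsetSum _ (fun t _ => measurable_const.indicator (hmeas t)), mul_add, Finset.mul_sum,
    ENNReal.ofReal_add (Finset.sum_nonneg fun t _ => by have := hF0 t; positivity) (by positivity),
    ENNReal.ofReal_sum_of_nonneg (fun t _ => by have := hF0 t; positivity)]
  refine add_le_add (Finset.sum_le_sum fun t _ => ?_) ?_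
  · rw [lintegral_indicator_const (hmeas t), ← mul_assoc, mul_comm, ENNReal.ofReal_mul (by positivity)]
    gcongr
    exact hL t
  · rw [lintegral_indicator_const (hmeas N), ← mul_assoc, mul_comm, ENNReal.ofReal_mul (by positivity)]
    gcongr
    exact hL N

end padic2


/-- The normalized discriminant. -/
def GG {R : Type*} [CommRing R] (h r i : R) : R := 4 * i ^ 3 - (r ^ 2 + h ^ 3 - 3 * i * h) ^ 2

section padic3

variable {p : ℕ} [hp : Fact p.Prime]

lemma norm_two_ne : (2 : ℤ_[p]) ≠ 0 := by
  have := norm_two_ge (p := p)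
  intro h; rw [h, norm_zero] at this; norm_num at this

lemma inv_norm_two : ‖(2 : ℤ_[p])‖⁻¹ ≤ 2 := by
  have := norm_two_ge (p := p)
  rw [inv_le_comm₀ (by linarith) (by norm_num)]; linarith

lemma hm_affine2 (S : Set ℤ_[p]) {c : ℝ} (hc : hm p S ≤ ENNReal.ofReal c) :
    hm p {x | 2 * x ∈ S} ≤ ENNReal.ofReal (2 * c) := by
  have := hm_affine p 2 0 norm_two_ne S
  simp only [add_zero] at this
  refine this.trans ?_
  rw [ENNReal.ofReal_mul (by norm_num)]
  exact mul_le_mul' (ENNReal.ofReal_le_ofReal inv_norm_two) hc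

lemma fiberA (k N : ℕ) (i : ℤ_[p]) (hN : N = ((2 * k + 2) / 3 + 1) / 2)
    (hi : ‖16 * i ^ 3‖ ≤ uu p ^ (2 * (2 * k))) :
    ∫⁻ h, hm p {r | ‖GG h r i‖ ≤ uu p ^ (2 * (2 * k))} ∂(hm p) ≤
      ENNReal.ofReal (64 * uu p ^ (2 * k + 1) / uu p ^ N
        + 8 * uu p ^ (2 * N + 2 * ((k + 1) / 2))) := by
  have hu := uu_pos p
  have h4i : ‖4 * i‖ ≤ uu p ^ (2 * ((2 * k + 2) / 3)) := by
    apply cube_aux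
    rw [show (4 * i) ^ 3 = 4 * (16 * i ^ 3) by ring, norm_mul]
    exact (mul_le_of_le_one_left (norm_nonneg _) (PadicInt.norm_le_one _)).trans hi
  have h12i : ‖12 * i‖ ≤ uu p ^ (2 * ((2 * k + 2) / 3)) := by
    rw [show 12 * i = 3 * (4 * i) by ring, norm_mul]
    exact (mul_le_of_le_one_left (norm_nonneg _) (PadicInt.norm_le_one _)).trans h4i
  have hsub : ∀ h : ℤ_[p], {r | ‖GG h r i‖ ≤ uu p ^ (2 * (2 * k))} ⊆
      {r | 2 * r ∈ {x : ℤ_[p] | ‖x ^ 2 - (-(h * (4 * h ^ 2 - 12 * i)))‖ ≤ uu p ^ (2 * k)}} := by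
    intro h r hr
    simp only [Set.mem_ofPred_eq, GG] at hr ⊢
    set J := r ^ 2 + h ^ 3 - 3 * i * h with hJ
    have h1 : ‖(2 * J) * (2 * J)‖ ≤ uu p ^ (2 * (2 * k)) := by
      rw [show (2 * J) * (2 * J) = 16 * i ^ 3 - 4 * (4 * i ^ 3 - J ^ 2) by ring]
      apply nrm_sub_le hi
      rw [norm_mul]
      exact (mul_le_of_le_one_left (norm_nonneg _) (PadicInt.norm_le_one _)).trans hr
    have h2 : ‖2 * J‖ ≤ uu p ^ (2 * k) := by
      have := half_aux h1
      rw [show (2 * k + 1) / 2 = k by omega] at this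
      simpa using this
    rw [show (2 * r) ^ 2 - (-(h * (4 * h ^ 2 - 12 * i))) = 2 * (2 * J) by rw [hJ]; ring, norm_mul]
    exact (mul_le_of_le_one_left (norm_nonneg _) (PadicInt.norm_le_one _)).trans h2
  have key := shell (fun h => hm p {r | ‖GG h r i‖ ≤ uu p ^ (2 * (2 * k))}) (fun h => 2 * h)
    (by fun_prop) 2 (by norm_num)
    (by
      intro t
      refine hm_affine2 {x | ‖x‖ ≤ uu p ^ (2 * t)} ?_
      rw [hm_pow]) N
    (fun t => 8 * uu p ^ (2 * k) / uu p ^ (3 * t)) (4 * uu p ^ (2 * ((k + 1) / 2)))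
    (fun t => by positivity) (by positivity)
    (by
      intro h t htN ht
      refine (measure_mono (hsub h)).trans ?_
      have h1 : ‖4 * h ^ 2 - 12 * i‖ = uu p ^ (2 * (2 * t)) := by
        have e1 : ‖4 * h ^ 2‖ = uu p ^ (2 * (2 * t)) := by
          rw [show 4 * h ^ 2 = (2 * h) ^ 2 by ring, norm_pow, ht, ← pow_mul]; congr 1; ring
        rw [← e1]
        apply nrm_eq_of_sub_lt
        rw [show 4 * h ^ 2 - 12 * i - 4 * h ^ 2 = - (12 * i) by ring, norm_neg, e1]
        refine lt_of_le_of_lt h12i ?_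
        by_contra hcon
        push Not at hcon
        rw [uu_le_iff] at hcon
        omega
      have h2 : uu p ^ (2 * (3 * t)) ≤ ‖-(h * (4 * h ^ 2 - 12 * i))‖ := by
        rw [norm_neg, norm_mul, h1]
        have : uu p ^ (2 * t) ≤ ‖h‖ := by
          rw [← ht, norm_mul]
          exact mul_le_of_le_one_left (norm_nonneg _) (PadicInt.norm_le_one _)
        rw [show 2 * (3 * t) = 2 * t + 2 * (2 * t) by ring, pow_add]
        gcongr
      refine (hm_affine2 _ (sq1 _ _ _ h2)).trans (ENNReal.ofReal_le_ofReal (le_of_eq ?_))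
      ring)
    (by
      intro h _
      refine (measure_mono (hsub h)).trans ?_
      refine (hm_affine2 _ (sq2 _ _)).trans (ENNReal.ofReal_le_ofReal (le_of_eq ?_))
      ring)
  refine key.trans (ENNReal.ofReal_le_ofReal ?_)
  have hs : ∑ t ∈ Finset.range N, uu p ^ (2 * t) * (8 * uu p ^ (2 * k) / uu p ^ (3 * t))
      = 8 * uu p ^ (2 * k) * ∑ t ∈ Finset.range N, 1 / uu p ^ t := by
    rw [Finset.mul_sum]
    refine Finset.sum_congr rfl fun t _ => ?_
    rw [show 3 * t = 2 * t + t by ring, pow_add]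
    field_simp
  rw [hs]
  have := geo_aux (uu p) hu (uu_le p) N
  have h3 := mul_le_mul_of_nonneg_left this (by positivity : 0 ≤ 8 * uu p ^ (2 * k))
  have e1 : 8 * uu p ^ (2 * k) * (4 * uu p / uu p ^ N) = 32 * uu p ^ (2 * k + 1) / uu p ^ N := by
    rw [pow_succ]; ring
  have e2 : 64 * uu p ^ (2 * k + 1) / uu p ^ N = 2 * (32 * uu p ^ (2 * k + 1) / uu p ^ N) := by ring
  rw [pow_add (uu p) (2 * N), e2]
  rw [e1] at h3
  linarith

lemma norm_three_ge : (1 : ℝ) / 3 ≤ ‖(3 : ℤ_[p])‖ := by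
  have := norm_nat_ge (p := p) 3 (by norm_num); exact_mod_cast this

lemma norm_four_ge : (1 : ℝ) / 4 ≤ ‖(4 : ℤ_[p])‖ := by
  have := norm_nat_ge (p := p) 4 (by norm_num); exact_mod_cast this

lemma fiberB1 (k m : ℕ) (w : ℤ_[p]) (hw : ‖w‖ = uu p ^ (2 * m)) (ρ : ℝ)
    (hρ : ρ = 4 * uu p ^ (4 * k) / uu p ^ (6 * m)) :
    ∫⁻ h, hm p {r | ‖r ^ 2 - (-((h + w) ^ 2 * (h - 2 * w)))‖ ≤ ρ} ∂(hm p) ≤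
      ENNReal.ofReal (130 * (k + 1) * uu p ^ (4 * k) / uu p ^ (7 * m)) := by
  have hu := uu_pos p
  have hρ0 : 0 < ρ := by rw [hρ]; positivity
  have hw0 : w ≠ 0 := by
    intro h; rw [h, norm_zero] at hw
    have : 0 < uu p ^ (2 * m) := by positivity
    linarith
  have h3w : (3 : ℤ_[p]) * w ≠ 0 := by
    refine mul_ne_zero ?_ hw0
    have := norm_three_ge (p := p)
    intro h; rw [h, norm_zero] at this; norm_num at this
  obtain ⟨T, hT⟩ := norm_cases h3w
  have hTm : 1 / uu p ^ T ≤ 2 / uu p ^ m := by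
    have h1 : uu p ^ (2 * m) / 3 ≤ uu p ^ (2 * T) := by
      rw [← hT, norm_mul, hw]
      have := norm_three_ge (p := p)
      have h0 : 0 < uu p ^ (2 * m) := by positivity
      nlinarith
    have h2 : uu p ^ m / 2 ≤ uu p ^ T := by
      rw [mul_comm, pow_mul, mul_comm, pow_mul] at h1
      apply abs_le_of_sq_le_sq' _ (by positivity) |>.2
      have : 0 < (uu p ^ m) ^ 2 := by positivity
      rw [div_pow]
      linarith
    rw [div_le_div_iff₀ (by positivity) (by positivity)]
    linarith
  set f : ℤ_[p] → ENNReal := fun h => hm p {r | ‖r ^ 2 - (-((h + w) ^ 2 * (h - 2 * w)))‖ ≤ ρ}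
    with hf
  have hf1 : ∀ h, f h ≤ ENNReal.ofReal 1 := fun h => by
    rw [ENNReal.ofReal_one]; exact prob_le_one
  have hcc : IsClosed {h : ℤ_[p] | ‖3 * w‖ ≤ ‖h - 2 * w‖} :=
    isClosed_le continuous_const (by fun_prop)
  rw [← lintegral_add_compl f hcc.measurableSet,
    ← lintegral_indicator hcc.measurableSet, ← lintegral_indicator hcc.measurableSet.compl]
  have k1 := shell (({h : ℤ_[p] | ‖3 * w‖ ≤ ‖h - 2 * w‖}).indicator f) (fun h => h + w)
    (by fun_prop) 1 (by norm_num)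
    (by
      intro t
      have := hm_ball p (-w) (uu p ^ (2 * t))
      simpa using this) (2 * k) (fun t => 4 * ρ / (uu p ^ (2 * t) * uu p ^ T)) 1
    (fun t => by positivity) (by norm_num)
    (by
      intro h t _ ht
      by_cases hh : ‖3 * w‖ ≤ ‖h - 2 * w‖
      · rw [Set.indicator_of_mem (by exact hh)]
        rw [← pow_add]
        apply sq1
        rw [norm_neg, norm_mul, norm_pow, ht, ← pow_mul, mul_add, pow_add,
          show 2 * (2 * t) = 2 * t * 2 by ring, ← hT]
        gcongr
      · rw [Set.indicator_of_notMem (by exact hh)]; exact zero_le)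
    (by
      intro h _
      exact (Set.indicator_le_self _ _ _).trans (hf1 h))
  have k2 := shell (({h : ℤ_[p] | ‖3 * w‖ ≤ ‖h - 2 * w‖}ᶜ).indicator f) (fun h => h - 2 * w)
    (by fun_prop) 1 (by norm_num)
    (by
      intro t
      have := hm_ball p (2 * w) (uu p ^ (2 * t))
      simpa using this) (2 * k)
      (fun t => if T < t then 4 * ρ / (uu p ^ (2 * T) * uu p ^ t) else 0) 1
    (fun t => by positivity) (by norm_num)
    (by
      intro h t _ ht
      by_cases hh : ‖3 * w‖ ≤ ‖h - 2 * w‖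
      · rw [Set.indicator_of_notMem (by simpa using hh)]; exact zero_le
      · rw [Set.indicator_of_mem (by exact hh)]
        have hlt : T < t := by
          rw [hT, ht, uu_le_iff] at hh; omega
        rw [if_pos hlt, ← pow_add]
        apply sq1
        have : ‖h + w‖ = ‖3 * w‖ := by
          apply nrm_eq_of_sub_lt
          rw [show h + w - 3 * w = h - 2 * w by ring]
          push Not at hh; exact hh
        rw [norm_neg, norm_mul, norm_pow, ht, this, hT, ← pow_mul, ← pow_add]
        apply le_of_eq; congr 1; ring)
    (by
      intro h _
      exact (Set.indicator_le_self _ _ _).trans (hf1 h))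
  refine (add_le_add k1 k2).trans ?_
  rw [← ENNReal.ofReal_add]
  rotate_left
  · have : ∀ t ∈ Finset.range (2 * k), 0 ≤ uu p ^ (2 * t) * (4 * ρ / (uu p ^ (2 * t) * uu p ^ T)) :=
      fun t _ => by positivity
    have := Finset.sum_nonneg this
    positivity
  · have : ∀ t ∈ Finset.range (2 * k),
        0 ≤ uu p ^ (2 * t) * (if T < t then 4 * ρ / (uu p ^ (2 * T) * uu p ^ t) else 0) :=
      fun t _ => by positivity
    have := Finset.sum_nonneg this
    positivity
  apply ENNReal.ofReal_le_ofReal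
  have s1 : ∑ t ∈ Finset.range (2 * k), uu p ^ (2 * t) * (4 * ρ / (uu p ^ (2 * t) * uu p ^ T))
      = 8 * k * ρ * (1 / uu p ^ T) := by
    rw [Finset.sum_congr rfl (g := fun _ => 4 * ρ * (1 / uu p ^ T))
      (fun t _ => by field_simp)]
    rw [Finset.sum_const, Finset.card_range]; simp; ring
  have s2 : ∑ t ∈ Finset.range (2 * k),
      uu p ^ (2 * t) * (if T < t then 4 * ρ / (uu p ^ (2 * T) * uu p ^ t) else 0)
      ≤ 16 * ρ * (1 / uu p ^ T) := by
    have e : ∀ t ∈ Finset.range (2 * k),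
        uu p ^ (2 * t) * (if T < t then 4 * ρ / (uu p ^ (2 * T) * uu p ^ t) else 0)
        = 4 * ρ / uu p ^ (2 * T) * (if T < t then uu p ^ t else 0) := by
      intro t _
      split_ifs
      · rw [show 2 * t = t + t by ring, pow_add]; field_simp
      · simp
    rw [Finset.sum_congr rfl e, ← Finset.mul_sum]
    have g := geo_aux2 (uu p) hu (uu_le p) T (2 * k)
    have g0 : 0 < uu p ^ max (2 * k) T := by positivity
    calc _ ≤ 4 * ρ / uu p ^ (2 * T) * (4 * uu p ^ T) := by
          gcongr; linarith
      _ = _ := by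
          rw [show 2 * T = T + T by ring, pow_add]; field_simp; ring
  rw [s1]
  have h5 : ρ * (1 / uu p ^ T) ≤ 8 * (uu p ^ (4 * k) / uu p ^ (7 * m)) := by
    calc ρ * (1 / uu p ^ T) ≤ ρ * (2 / uu p ^ m) := by gcongr
      _ = _ := by rw [hρ, show 7 * m = 6 * m + m by ring, pow_add]; field_simp; ring
  have h6 : uu p ^ (4 * k) ≤ uu p ^ (4 * k) / uu p ^ (7 * m) := by
    rw [le_div_iff₀ (by positivity)]
    apply mul_le_of_le_one_right (by positivity)
    exact pow_le_one₀ hu.le ((uu_le p).trans (by norm_num))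
  rw [show 2 * (2 * k) = 4 * k by ring]
  have hk : (0 : ℝ) ≤ k := by positivity
  have h7 := mul_le_mul_of_nonneg_left h5 hk
  have e3 : 130 * ((k : ℝ) + 1) * uu p ^ (4 * k) / uu p ^ (7 * m) =
     130 * (k * (uu p ^ (4 * k) / uu p ^ (7 * m))) + 130 * (uu p ^ (4 * k) / uu p ^ (7 * m)) := by
    ring
  rw [e3]
  have h8 : 0 ≤ (k : ℝ) * (uu p ^ (4 * k) / uu p ^ (7 * m)) := by positivity
  nlinarith

lemma fiberB (k m : ℕ) (w : ℤ_[p]) (hw : ‖w‖ = uu p ^ (2 * m)) :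
    ∫⁻ h, hm p {r | ‖GG h r (w ^ 2)‖ ≤ uu p ^ (2 * (2 * k))} ∂(hm p) ≤
      ENNReal.ofReal (260 * (k + 1) * uu p ^ (4 * k) / uu p ^ (7 * m)) := by
  have hu := uu_pos p
  set ρ := 4 * uu p ^ (4 * k) / uu p ^ (6 * m) with hρ
  have b1 := fiberB1 k m w hw ρ hρ
  have b2 := fiberB1 k m (-w) (by rw [norm_neg]; exact hw) ρ hρ
  have hmea : ∀ w : ℤ_[p], Measurable
      fun h => hm p {r | ‖r ^ 2 - (-((h + w) ^ 2 * (h - 2 * w)))‖ ≤ ρ} := by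
    intro w
    have : IsClosed {q : ℤ_[p] × ℤ_[p] | ‖q.2 ^ 2 - (-((q.1 + w) ^ 2 * (q.1 - 2 * w)))‖ ≤ ρ} :=
      isClosed_le (by fun_prop) continuous_const
    exact measurable_measure_prodMk_left this.measurableSet
  have hle : ∀ h, hm p {r | ‖GG h r (w ^ 2)‖ ≤ uu p ^ (2 * (2 * k))} ≤
      hm p {r | ‖r ^ 2 - (-((h + w) ^ 2 * (h - 2 * w)))‖ ≤ ρ} +
      hm p {r | ‖r ^ 2 - (-((h + -w) ^ 2 * (h - 2 * -w)))‖ ≤ ρ} := by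
    intro h
    refine le_trans (measure_mono ?_) (measure_union_le _ _)
    intro r hr
    simp only [Set.mem_ofPred_eq, GG, Set.mem_union] at hr ⊢
    set J := r ^ 2 + h ^ 3 - 3 * w ^ 2 * h with hJ
    have h1 : ‖(J - 2 * w ^ 3) * (J + 2 * w ^ 3)‖ ≤ uu p ^ (2 * (2 * k)) := by
      rw [← norm_neg]
      rwa [show -((J - 2 * w ^ 3) * (J + 2 * w ^ 3)) = 4 * (w ^ 2) ^ 3 - J ^ 2 by ring]
    have h2 := sepr h1 (δ := uu p ^ (6 * m) / 4) (by positivity) (by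
      rw [show 2 * (2 * w ^ 3) = 4 * w ^ 3 by ring, norm_mul, norm_pow, hw, ← pow_mul,
        show 2 * m * 3 = 6 * m by ring]
      have := norm_four_ge (p := p)
      have h0 : 0 < uu p ^ (6 * m) := by positivity
      nlinarith)
    have h3 : uu p ^ (2 * (2 * k)) / (uu p ^ (6 * m) / 4) = ρ := by
      rw [hρ, show 2 * (2 * k) = 4 * k by ring]; field_simp
    rw [h3] at h2
    rcases h2 with h2 | h2
    · left
      rwa [show r ^ 2 - (-((h + w) ^ 2 * (h - 2 * w))) = J - 2 * w ^ 3 by rw [hJ]; ring]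
    · right
      rwa [show r ^ 2 - (-((h + -w) ^ 2 * (h - 2 * -w))) = J + 2 * w ^ 3 by rw [hJ]; ring]
  refine (lintegral_mono hle).trans ?_
  rw [lintegral_add_left (hmea w)]
  refine (add_le_add b1 b2).trans ?_
  rw [← ENNReal.ofReal_add (by positivity) (by positivity)]
  apply ENNReal.ofReal_le_ofReal
  apply le_of_eq; ring

end padic3


section padic4

variable {p : ℕ} [hp : Fact p.Prime]

lemma dvd_of_nrm {α x : ℤ_[p]} (hα : α ≠ 0) (h : ‖x‖ ≤ ‖α‖) : α ∣ x := by
  rw [PadicInt.unitCoeff_spec hα, mul_comm]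
  refine (Units.mul_right_dvd).2 ?_
  rw [← norm_le_uu, uu_pow, ← PadicInt.norm_eq_zpow_neg_valuation hα]; exact h

lemma hensel_aux (i y : ℤ_[p]) (ε : ℝ) (h1 : ε < ‖16 * i ^ 3‖) (h2 : ‖4 * i ^ 3 - y ^ 2‖ ≤ ε) :
    ∃ w, w ^ 2 = i := by
  have hε : 0 ≤ ε := le_trans (norm_nonneg _) h2
  have hi : i ≠ 0 := by
    rintro rfl
    simp at h1
    linarith
  have e16 : ‖16 * i ^ 3‖ = ‖(4 : ℤ_[p])‖ * ‖4 * i ^ 3‖ := by rw [← norm_mul]; congr 1; ring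
  have h3 : ‖16 * i ^ 3‖ ≤ ‖4 * i ^ 3‖ := by
    rw [e16]; exact mul_le_of_le_one_left (norm_nonneg _) (PadicInt.norm_le_one _)
  have h4 : ‖y ^ 2‖ = ‖4 * i ^ 3‖ := by
    apply nrm_eq_of_sub_lt
    rw [norm_sub_rev]
    linarith
  have h5 : ‖2 * y‖ ^ 2 = ‖16 * i ^ 3‖ := by
    rw [e16, ← h4, ← norm_mul, ← norm_pow]; congr 1; ring
  obtain ⟨Y, hY, -⟩ := hensels_lemma (p := p) (R := ℤ_[p])
    (F := (Polynomial.X ^ 2 - Polynomial.C (4 * i ^ 3) : Polynomial ℤ_[p]))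
    (a := y) (by
      simp only [Polynomial.aeval_def, Polynomial.eval₂_sub, Polynomial.eval₂_pow,
        Polynomial.eval₂_X, Polynomial.eval₂_C, Polynomial.derivative_sub,
        Polynomial.derivative_X_pow, Polynomial.derivative_C, Algebra.algebraMap_self,
        RingHom.id_apply]
      have : ‖y ^ 2 - 4 * i ^ 3‖ < ‖2 * y‖ ^ 2 := by
        rw [norm_sub_rev, h5]; linarith
      simpa using this)
  have hY2 : Y ^ 2 = 4 * i ^ 3 := by
    simp at hY
    exact sub_eq_zero.1 hY
  have h2i : 2 * i ≠ 0 := mul_ne_zero norm_two_ne hi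
  have hd : 2 * i ∣ Y := by
    apply dvd_of_nrm h2i
    apply abs_le_of_sq_le_sq' _ (norm_nonneg _) |>.2
    rw [← norm_pow, ← norm_pow, hY2, show 4 * i ^ 3 = (2 * i) ^ 2 * i by ring, norm_mul]
    exact mul_le_of_le_one_right (norm_nonneg _) (PadicInt.norm_le_one _)
  obtain ⟨w, rfl⟩ := hd
  refine ⟨w, ?_⟩
  apply mul_left_cancel₀ (pow_ne_zero 2 h2i)
  linear_combination hY2

lemma core (k E : ℕ)
    (hE1 : E + ((2 * k + 2) / 3 + 1) / 2 ≤ 2 * ((2 * k + 2) / 3) + 2 * k + 1)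
    (hE2 : E ≤ 2 * ((2 * k + 2) / 3) + 2 * (((2 * k + 2) / 3 + 1) / 2) + 2 * ((k + 1) / 2))
    (hE3 : E + 3 * ((k + 2) / 3) ≤ 4 * k + 3) :
    ∫⁻ i, ∫⁻ h, hm p {r | ‖GG h r i‖ ≤ uu p ^ (2 * (2 * k))} ∂(hm p) ∂(hm p) ≤
      ENNReal.ofReal (1400 * (k + 1) * uu p ^ E) := by
  have hu := uu_pos p
  set s := (2 * k + 2) / 3 with hs
  set N := (s + 1) / 2 with hN
  set M := (k + 2) / 3 with hM
  set KA := 64 * uu p ^ (2 * k + 1) / uu p ^ N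
        + 8 * uu p ^ (2 * N + 2 * ((k + 1) / 2)) with hKA
  have hKA0 : 0 ≤ KA := by positivity
  set D : ℕ → ℝ := fun m => 260 * (k + 1) * uu p ^ (4 * k) / uu p ^ (7 * m) with hD
  set A : Set ℤ_[p] := {i | 4 * i ∈ {x : ℤ_[p] | ‖x‖ ≤ uu p ^ (2 * s)}} with hA
  set g : ℤ_[p] → ENNReal := fun i =>
    ∑ m ∈ Finset.range M, ({i | ‖i‖ ≤ uu p ^ (2 * (2 * m))}).indicator
      (fun _ => ENNReal.ofReal (D m)) i
      + A.indicator (fun _ => ENNReal.ofReal KA) i with hg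
  have hmA : MeasurableSet A := (isClosed_le (by fun_prop) continuous_const :
    IsClosed {i : ℤ_[p] | ‖4 * i‖ ≤ uu p ^ (2 * s)}).measurableSet
  have hmeas : ∀ t : ℕ, MeasurableSet {x : ℤ_[p] | ‖x‖ ≤ uu p ^ (2 * t)} := fun t =>
    (isClosed_le continuous_norm continuous_const).measurableSet
  have hfg : ∀ i, ∫⁻ h, hm p {r | ‖GG h r i‖ ≤ uu p ^ (2 * (2 * k))} ∂(hm p) ≤ g i := by
    intro i
    rcases le_or_gt ‖16 * i ^ 3‖ (uu p ^ (2 * (2 * k))) with hc | hc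
    · refine (fiberA k N i rfl hc).trans ?_
      refine le_trans ?_ le_add_self
      rw [Set.indicator_of_mem]
      show ‖4 * i‖ ≤ uu p ^ (2 * s)
      apply cube_aux
      rw [show (4 * i) ^ 3 = 4 * (16 * i ^ 3) by ring, norm_mul]
      exact (mul_le_of_le_one_left (norm_nonneg _) (PadicInt.norm_le_one _)).trans hc
    · by_cases hne : ∃ y : ℤ_[p], ‖4 * i ^ 3 - y ^ 2‖ ≤ uu p ^ (2 * (2 * k))
      · obtain ⟨y, hy⟩ := hne
        obtain ⟨w, rfl⟩ := hensel_aux i y _ hc hy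
        have hw0 : w ≠ 0 := by
          rintro rfl
          simp at hc
          have : 0 < uu p ^ (2 * (2 * k)) := by positivity
          linarith
        obtain ⟨m, hm'⟩ := norm_cases hw0
        refine (fiberB k m w hm').trans ?_
        have hmM : m < M := by
          rw [norm_mul, norm_pow, norm_pow, hm', ← pow_mul, ← pow_mul] at hc
          have h1 : uu p ^ (2 * (2 * k)) < uu p ^ (2 * m * (2 * 3)) :=
            lt_of_lt_of_le hc (mul_le_of_le_one_left (by positivity) (PadicInt.norm_le_one _))
          have h2 : 2 * m * (2 * 3) < 2 * (2 * k) := by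
            by_contra hcon
            push Not at hcon
            have := uu_anti (p := p) hcon
            linarith
          omega
        refine le_trans ?_ le_self_add
        refine le_trans ?_ (Finset.single_le_sum (fun _ _ => zero_le) (Finset.mem_range.2 hmM))
        rw [Set.indicator_of_mem]
        show ‖w ^ 2‖ ≤ _
        rw [norm_pow, hm', ← pow_mul]
        apply le_of_eq; congr 1; ring
      · have : ∀ h : ℤ_[p], {r | ‖GG h r i‖ ≤ uu p ^ (2 * (2 * k))} = ∅ := by
          intro h
          ext r
          simp only [Set.mem_ofPred_eq, Set.mem_empty_iff_false, iff_false]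
          intro hr
          exact hne ⟨_, hr⟩
        simp [this]
  refine (lintegral_mono hfg).trans ?_
  rw [hg, lintegral_add_right _ (measurable_const.indicator hmA),
    lintegral_finsetSum _ (fun t _ => measurable_const.indicator (hmeas _))]
  have hD0 : ∀ m, 0 ≤ D m := fun m => by rw [hD]; positivity
  have i1 : ∀ m, ∫⁻ i, ({i | ‖i‖ ≤ uu p ^ (2 * (2 * m))}).indicator
      (fun _ => ENNReal.ofReal (D m)) i ∂(hm p) = ENNReal.ofReal (D m * uu p ^ (2 * (2 * m))) := by
    intro m
    rw [lintegral_indicator_const (hmeas _), hm_pow, ← ENNReal.ofReal_mul (hD0 m)]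
  have i2 : ∫⁻ i, A.indicator (fun _ => ENNReal.ofReal KA) i ∂(hm p) ≤
      ENNReal.ofReal (KA * (4 * uu p ^ (2 * s))) := by
    rw [lintegral_indicator_const hmA, ENNReal.ofReal_mul hKA0]
    gcongr
    have e : A = {i | 2 * i ∈ {x | 2 * x ∈ {x : ℤ_[p] | ‖x‖ ≤ uu p ^ (2 * s)}}} := by
      rw [hA]; ext i
      simp only [Set.mem_ofPred_eq]
      rw [show 4 * i = 2 * (2 * i) by ring]
    rw [e]
    refine (hm_affine2 _ (hm_affine2 _ (hm_pow p s).le)).trans (le_of_eq ?_)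
    congr 1; ring
  rw [Finset.sum_congr rfl (fun m _ => i1 m),
    ← ENNReal.ofReal_sum_of_nonneg (fun m _ => by have := hD0 m; positivity)]
  refine (add_le_add le_rfl i2).trans ?_
  rw [← ENNReal.ofReal_add (Finset.sum_nonneg (fun m _ => by have := hD0 m; positivity))
    (by positivity)]
  apply ENNReal.ofReal_le_ofReal
  have s1 : ∑ m ∈ Finset.range M, D m * uu p ^ (2 * (2 * m)) =
      260 * (k + 1) * uu p ^ (4 * k) * ∑ m ∈ Finset.range M, 1 / (uu p ^ 3) ^ m := by
    rw [Finset.mul_sum]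
    refine Finset.sum_congr rfl fun m _ => ?_
    rw [hD]
    simp only
    rw [← pow_mul, show 7 * m = 2 * (2 * m) + 3 * m by ring, pow_add]
    field_simp
  have hu1 : uu p ^ 3 ≤ 3 / 4 := by
    refine le_trans ?_ (uu_le p)
    have := uu_anti (p := p) (m := 1) (n := 3) (by norm_num)
    simpa using this
  have s2 := geo_aux (uu p ^ 3) (by positivity) hu1 M
  have hk : (0 : ℝ) ≤ k := by positivity
  have t1 : uu p ^ (4 * k) * (uu p ^ 3 / (uu p ^ 3) ^ M) ≤ uu p ^ E := by
    rw [← mul_div_assoc, div_le_iff₀ (by positivity), ← pow_mul, ← pow_add, ← pow_add]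
    exact uu_anti hE3
  have t2 : uu p ^ (2 * k + 1) / uu p ^ N * uu p ^ (2 * s) ≤ uu p ^ E := by
    rw [div_mul_eq_mul_div, div_le_iff₀ (by positivity), ← pow_add, ← pow_add]
    exact uu_anti (by omega)
  have t3 : uu p ^ (2 * N + 2 * ((k + 1) / 2)) * uu p ^ (2 * s) ≤ uu p ^ E := by
    rw [← pow_add]
    exact uu_anti (by omega)
  rw [s1]
  have s3 : 260 * (k + 1) * uu p ^ (4 * k) * ∑ m ∈ Finset.range M, 1 / (uu p ^ 3) ^ m ≤
      1040 * (k + 1) * uu p ^ E := by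
    calc _ ≤ 260 * (k + 1) * uu p ^ (4 * k) * (4 * uu p ^ 3 / (uu p ^ 3) ^ M) := by gcongr
      _ = 1040 * (k + 1) * (uu p ^ (4 * k) * (uu p ^ 3 / (uu p ^ 3) ^ M)) := by ring
      _ ≤ _ := by gcongr
  have s4 : KA * (4 * uu p ^ (2 * s)) = 256 * (uu p ^ (2 * k + 1) / uu p ^ N * uu p ^ (2 * s)) +
      32 * (uu p ^ (2 * N + 2 * ((k + 1) / 2)) * uu p ^ (2 * s)) := by rw [hKA]; ring
  rw [s4]
  have : 0 < uu p ^ E := by positivity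
  nlinarith [mul_nonneg hk this.le]

end padic4


section padic5

variable {p : ℕ} [hp : Fact p.Prime]

def Phi (p : ℕ) [Fact p.Prime] :
    (ℤ_[p] × ℤ_[p] × ℤ_[p] × ℤ_[p] × ℤ_[p]) →+ (Fin 5 → ℤ_[p]) where
  toFun x := ![x.1, x.2.1, x.2.2.1, x.2.2.2.1, x.2.2.2.2]
  map_zero' := by ext i; fin_cases i <;> rfl
  map_add' x y := by ext i; fin_cases i <;> rfl

lemma Phi_cont : Continuous (Phi p) := by
  refine continuous_pi ?_
  intro i
  fin_cases i <;> simp only [Phi] <;> dsimp <;> fun_prop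

lemma Phi_surj : Function.Surjective (Phi p) := by
  intro v
  refine ⟨(v 0, v 1, v 2, v 3, v 4), ?_⟩
  ext i
  fin_cases i <;> rfl

lemma lint5 (ν : Measure (Fin 5 → ℤ_[p])) [IsProbabilityMeasure ν] [ν.IsAddLeftInvariant]
    (F : (Fin 5 → ℤ_[p]) → ENNReal) (hF : Measurable F) :
    ∫⁻ v, F v ∂ν = ∫⁻ a, ∫⁻ b, ∫⁻ c, ∫⁻ d, ∫⁻ e, F ![a, b, c, d, e]
      ∂(hm p) ∂(hm p) ∂(hm p) ∂(hm p) ∂(hm p) := by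
  have hPm : Measurable (Phi p) := (Phi_cont (p := p)).measurable
  have q2 : ((hm p).prod (hm p)).IsAddLeftInvariant := Measure.prod.instIsAddLeftInvariant
  have q3 : ((hm p).prod ((hm p).prod (hm p))).IsAddLeftInvariant :=
    Measure.prod.instIsAddLeftInvariant
  have q4 : ((hm p).prod ((hm p).prod ((hm p).prod (hm p)))).IsAddLeftInvariant :=
    Measure.prod.instIsAddLeftInvariant
  have q5 : ((hm p).prod ((hm p).prod ((hm p).prod ((hm p).prod (hm p))))).IsAddLeftInvariant :=
    Measure.prod.instIsAddLeftInvariant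
  have h1 : (Measure.map (Phi p) ((hm p).prod ((hm p).prod ((hm p).prod
      ((hm p).prod (hm p)))))).IsAddLeftInvariant :=
    isAddLeftInvariant_map (Phi p).toAddHom hPm Phi_surj
  have h2 : IsProbabilityMeasure (Measure.map (Phi p) ((hm p).prod ((hm p).prod ((hm p).prod
      ((hm p).prod (hm p)))))) := Measure.isProbabilityMeasure_map hPm.aemeasurable
  rw [uniq_aux ν (Measure.map (Phi p) ((hm p).prod ((hm p).prod ((hm p).prod
      ((hm p).prod (hm p)))))), lintegral_map hF hPm]
  have hG : Measurable (fun x => F (Phi p x)) := hF.comp hPm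
  rw [lintegral_prod _ hG.aemeasurable]
  refine lintegral_congr fun a => ?_
  have hG1 : Measurable (fun x => F (Phi p (a, x))) := hG.comp (by fun_prop)
  rw [lintegral_prod _ hG1.aemeasurable]
  refine lintegral_congr fun b => ?_
  have hG2 : Measurable (fun x => F (Phi p (a, b, x))) := hG1.comp (by fun_prop)
  rw [lintegral_prod _ hG2.aemeasurable]
  refine lintegral_congr fun c => ?_
  have hG3 : Measurable (fun x => F (Phi p (a, b, c, x))) := hG2.comp (by fun_prop)
  rw [lintegral_prod _ hG3.aemeasurable]
  rfl

lemma disc_GG (a b c d e : ℤ_[p]) :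
    GG (24 * a * c + (-9 * b ^ 2)) (216 * a ^ 2 * d + (27 * b ^ 3 - 108 * a * b * c))
      (1728 * a ^ 3 * e + 144 * a ^ 2 * (c ^ 2 - 3 * b * d)) =
      80621568 * a ^ 6 * (ofVec ![a, b, c, d, e]).disc := by
  simp only [GG, BQ.disc, ofVec, Matrix.cons_val]
  ring

lemma slope_aux (n m : ℕ) (hn : n ≠ 0) (a : ℤ_[p]) (ha : ‖(24 : ℤ_[p])‖ ≤ ‖a‖) :
    (n : ℤ_[p]) * a ^ m ≠ 0 ∧ ENNReal.ofReal (‖(n : ℤ_[p]) * a ^ m‖⁻¹) ≤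
      ENNReal.ofReal (n * 24 ^ m) := by
  have h1 := norm_nat_ge (p := p) n hn
  have h2 := norm_nat_ge (p := p) 24 (by norm_num)
  push_cast at h2
  have h3 : (1 / 24 : ℝ) ≤ ‖a‖ := h2.trans ha
  have hn' : (0 : ℝ) < n := by exact_mod_cast Nat.pos_of_ne_zero hn
  have h4 : 1 / ((n : ℝ) * 24 ^ m) ≤ ‖(n : ℤ_[p]) * a ^ m‖ := by
    rw [norm_mul, norm_pow]
    calc 1 / ((n : ℝ) * 24 ^ m) = 1 / n * (1 / 24) ^ m := by
          rw [div_pow, one_pow]; field_simp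
      _ ≤ _ := by gcongr
  have h5 : 0 < 1 / ((n : ℝ) * 24 ^ m) := by positivity
  refine ⟨norm_pos_iff.1 (h5.trans_le h4), ENNReal.ofReal_le_ofReal ?_⟩
  rw [← one_div]
  exact (one_div_le (h5.trans_le h4) (by positivity)).2 h4

def K1 : ℝ := (24 * 24 ^ 1) * ((216 * 24 ^ 2) * (1728 * 24 ^ 3))

lemma fiber5 (F : ℤ_[p] × ℤ_[p] × ℤ_[p] → ENNReal) (hF : Measurable F) (a b : ℤ_[p])
    (ha : ‖(24 : ℤ_[p])‖ ≤ ‖a‖) :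
    ∫⁻ c, ∫⁻ d, ∫⁻ e, F (24 * a * c + (-9 * b ^ 2),
      216 * a ^ 2 * d + (27 * b ^ 3 - 108 * a * b * c),
      1728 * a ^ 3 * e + 144 * a ^ 2 * (c ^ 2 - 3 * b * d)) ∂(hm p) ∂(hm p) ∂(hm p) ≤
      ENNReal.ofReal K1 * ∫⁻ i, ∫⁻ h, ∫⁻ r, F (h, r, i) ∂(hm p) ∂(hm p) ∂(hm p) := by
  have s1 := slope_aux 24 1 (by norm_num) a ha
  have s2 := slope_aux 216 2 (by norm_num) a ha
  have s3 := slope_aux 1728 3 (by norm_num) a ha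
  push_cast at s1 s2 s3
  rw [pow_one] at s1
  have hT1 : Measurable (fun x : ℤ_[p] × ℤ_[p] => ∫⁻ i, F (x.1, x.2, i) ∂(hm p)) := by
    refine Measurable.lintegral_prod_right' (f := fun (y : (ℤ_[p] × ℤ_[p]) × ℤ_[p]) => F (y.1.1, y.1.2, y.2)) ?_
    exact hF.comp (by fun_prop)
  have hT2 : Measurable (fun h : ℤ_[p] => ∫⁻ r, ∫⁻ i, F (h, r, i) ∂(hm p) ∂(hm p)) :=
    Measurable.lintegral_prod_right' hT1
  calc _ ≤ ∫⁻ c, ∫⁻ d, ENNReal.ofReal (1728 * 24 ^ 3) * ∫⁻ i, F (24 * a * c + (-9 * b ^ 2),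
      216 * a ^ 2 * d + (27 * b ^ 3 - 108 * a * b * c), i) ∂(hm p) ∂(hm p) ∂(hm p) := by
        refine lintegral_mono fun c => lintegral_mono fun d => ?_
        refine (lint_affine p _ _ s3.1 (fun i => F (24 * a * c + (-9 * b ^ 2),
          216 * a ^ 2 * d + (27 * b ^ 3 - 108 * a * b * c), i)) (hF.comp (by fun_prop))).trans ?_
        exact mul_le_mul' s3.2 le_rfl
    _ = ENNReal.ofReal (1728 * 24 ^ 3) * ∫⁻ c, ∫⁻ d, ∫⁻ i, F (24 * a * c + (-9 * b ^ 2),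
      216 * a ^ 2 * d + (27 * b ^ 3 - 108 * a * b * c), i) ∂(hm p) ∂(hm p) ∂(hm p) := by
        rw [← lintegral_const_mul' _ _ ENNReal.ofReal_ne_top]
        refine lintegral_congr fun c => ?_
        rw [lintegral_const_mul' _ _ ENNReal.ofReal_ne_top]
    _ ≤ ENNReal.ofReal (1728 * 24 ^ 3) * ∫⁻ c, ENNReal.ofReal (216 * 24 ^ 2) *
        ∫⁻ r, ∫⁻ i, F (24 * a * c + (-9 * b ^ 2), r, i) ∂(hm p) ∂(hm p) ∂(hm p) := by
        gcongr with c
        refine (lint_affine p _ _ s2.1 (fun r => ∫⁻ i, F (24 * a * c + (-9 * b ^ 2), r, i) ∂(hm p))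
          (hT1.comp (by fun_prop : Measurable (fun r : ℤ_[p] => (24 * a * c + (-9 * b ^ 2), r))))).trans ?_
        exact mul_le_mul' s2.2 le_rfl
    _ ≤ ENNReal.ofReal (1728 * 24 ^ 3) * (ENNReal.ofReal (216 * 24 ^ 2) * (ENNReal.ofReal (24 * 24 ^ 1) *
        ∫⁻ h, ∫⁻ r, ∫⁻ i, F (h, r, i) ∂(hm p) ∂(hm p) ∂(hm p))) := by
        rw [lintegral_const_mul' _ _ ENNReal.ofReal_ne_top]
        gcongr
        refine (lint_affine p _ _ s1.1 (fun h => ∫⁻ r, ∫⁻ i, F (h, r, i) ∂(hm p) ∂(hm p)) hT2).trans ?_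
        exact mul_le_mul' s1.2 le_rfl
    _ = ENNReal.ofReal K1 * ∫⁻ h, ∫⁻ r, ∫⁻ i, F (h, r, i) ∂(hm p) ∂(hm p) ∂(hm p) := by
        rw [K1, ENNReal.ofReal_mul (p := 24 * 24 ^ 1) (by positivity),
          ENNReal.ofReal_mul (p := 216 * 24 ^ 2) (by positivity)]
        ring
    _ = _ := by
        congr 1
        have hsw : ∀ h, ∫⁻ r, ∫⁻ i, F (h, r, i) ∂(hm p) ∂(hm p) = ∫⁻ i, ∫⁻ r, F (h, r, i) ∂(hm p) ∂(hm p) := by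
          intro h
          exact lintegral_lintegral_swap (f := fun r i => F (h, r, i)) (Measurable.aemeasurable (hF.comp (by fun_prop)))
        rw [lintegral_congr hsw]
        refine lintegral_lintegral_swap (f := fun h i => ∫⁻ r, F (h, r, i) ∂(hm p)) (Measurable.aemeasurable ?_)
        refine Measurable.lintegral_prod_right' (f := fun (y : (ℤ_[p] × ℤ_[p]) × ℤ_[p]) => F (y.1.1, y.2, y.1.2)) ?_
        exact hF.comp (by fun_prop)

def BB (p k : ℕ) [Fact p.Prime] : Set (Fin 5 → ℤ_[p]) :=
  {v | ‖(24 : ℤ_[p])‖ ≤ ‖v 0‖ ∧ ‖(ofVec v).disc‖ ≤ uu p ^ (2 * (2 * k))}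

lemma disc_cont : Continuous (fun v : Fin 5 → ℤ_[p] => (ofVec v).disc) := by
  simp only [BQ.disc, ofVec]
  fun_prop

lemma BB_closed (k : ℕ) : IsClosed (BB p k) := by
  refine IsClosed.inter ?_ ?_
  · exact isClosed_le continuous_const (continuous_apply 0).norm
  · exact isClosed_le (disc_cont.norm) continuous_const

lemma BB_bound (ν : Measure (Fin 5 → ℤ_[p])) [IsProbabilityMeasure ν] [ν.IsAddLeftInvariant]
    (k E : ℕ)
    (hE1 : E + ((2 * k + 2) / 3 + 1) / 2 ≤ 2 * ((2 * k + 2) / 3) + 2 * k + 1)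
    (hE2 : E ≤ 2 * ((2 * k + 2) / 3) + 2 * (((2 * k + 2) / 3 + 1) / 2) + 2 * ((k + 1) / 2))
    (hE3 : E + 3 * ((k + 2) / 3) ≤ 4 * k + 3) :
    ν (BB p k) ≤ ENNReal.ofReal (K1 * (1400 * (k + 1) * uu p ^ E)) := by
  have hBm := (BB_closed (p := p) k).measurableSet
  have hGc : Continuous (fun y : ℤ_[p] × ℤ_[p] × ℤ_[p] => GG y.1 y.2.1 y.2.2) := by
    simp only [GG]; fun_prop
  set W : Set (ℤ_[p] × ℤ_[p] × ℤ_[p]) := {y | ‖GG y.1 y.2.1 y.2.2‖ ≤ uu p ^ (2 * (2 * k))} with hW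
  have hWm : MeasurableSet W := (isClosed_le hGc.norm continuous_const).measurableSet
  have hF : Measurable (W.indicator (fun _ => (1 : ENNReal))) := measurable_const.indicator hWm
  rw [← lintegral_indicator_one hBm, lint5 ν _ (measurable_one.indicator hBm)]
  have key : ∀ a b, ∫⁻ c, ∫⁻ d, ∫⁻ e, (BB p k).indicator 1 ![a, b, c, d, e]
      ∂(hm p) ∂(hm p) ∂(hm p) ≤ ENNReal.ofReal (K1 * (1400 * (k + 1) * uu p ^ E)) := by
    intro a b
    by_cases ha : ‖(24 : ℤ_[p])‖ ≤ ‖a‖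
    · have h1 := fiber5 _ hF a b ha
      have h2 : ∫⁻ i, ∫⁻ h, ∫⁻ r, W.indicator (fun _ => (1 : ENNReal)) (h, r, i)
          ∂(hm p) ∂(hm p) ∂(hm p) ≤ ENNReal.ofReal (1400 * (k + 1) * uu p ^ E) := by
        refine le_trans (le_of_eq ?_) (core (p := p) k E hE1 hE2 hE3)
        refine lintegral_congr fun i => lintegral_congr fun h => ?_
        have hm' : MeasurableSet {r | ‖GG h r i‖ ≤ uu p ^ (2 * (2 * k))} :=
          (isClosed_le (by simp only [GG]; fun_prop) continuous_const).measurableSet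
        rw [← lintegral_indicator_one hm']
        rfl
      have hK : 0 ≤ K1 := by unfold K1; positivity
      rw [ENNReal.ofReal_mul hK]
      refine le_trans ?_ (h1.trans (by gcongr))
      refine lintegral_mono fun c => lintegral_mono fun d => lintegral_mono fun e => ?_
      by_cases hv : ![a, b, c, d, e] ∈ BB p k
      · have hw : ((24 * a * c + (-9 * b ^ 2), 216 * a ^ 2 * d + (27 * b ^ 3 - 108 * a * b * c),
            1728 * a ^ 3 * e + 144 * a ^ 2 * (c ^ 2 - 3 * b * d)) : ℤ_[p] × ℤ_[p] × ℤ_[p]) ∈ W := by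
          rw [hW, Set.mem_ofPred_eq]
          dsimp only
          rw [disc_GG, norm_mul]
          exact (mul_le_of_le_one_left (norm_nonneg _) (PadicInt.norm_le_one _)).trans hv.2
        rw [Set.indicator_of_mem hv, Set.indicator_of_mem hw]
        rfl
      · rw [Set.indicator_of_notMem hv]
        exact zero_le
    · have : ∀ c d e, (BB p k).indicator (1 : (Fin 5 → ℤ_[p]) → ENNReal) ![a, b, c, d, e] = 0 := by
        intro c d e
        exact Set.indicator_of_notMem (fun h => ha h.1) _
      simp [this]
  calc _ ≤ ∫⁻ a, ∫⁻ b, ENNReal.ofReal (K1 * (1400 * (k + 1) * uu p ^ E)) ∂(hm p) ∂(hm p) :=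
        lintegral_mono fun a => lintegral_mono fun b => key a b
    _ = _ := by simp

end padic5

section padic6

variable {p : ℕ} [hp : Fact p.Prime]

/-- The shear `f(x, y) ↦ f(x, y + t x)`. -/
def sh (t : ℤ_[p]) : (Fin 5 → ℤ_[p]) →+ (Fin 5 → ℤ_[p]) where
  toFun v := ![v 0 + v 1 * t + v 2 * t ^ 2 + v 3 * t ^ 3 + v 4 * t ^ 4,
    v 1 + 2 * v 2 * t + 3 * v 3 * t ^ 2 + 4 * v 4 * t ^ 3,
    v 2 + 3 * v 3 * t + 6 * v 4 * t ^ 2, v 3 + 4 * v 4 * t, v 4]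
  map_zero' := by ext i; fin_cases i <;> simp
  map_add' x y := by ext i; fin_cases i <;> simp <;> ring

lemma sh_cont (t : ℤ_[p]) : Continuous (sh t) := by
  refine continuous_pi ?_
  intro i
  fin_cases i <;> simp only [sh] <;> dsimp <;> fun_prop

lemma sh_inv (t : ℤ_[p]) (v : Fin 5 → ℤ_[p]) : sh (-t) (sh t v) = v := by
  ext i
  fin_cases i <;> simp [sh] <;> ring

lemma sh_disc (t : ℤ_[p]) (v : Fin 5 → ℤ_[p]) : (ofVec (sh t v)).disc = (ofVec v).disc := by
  simp only [sh, ofVec, BQ.disc, AddMonoidHom.coe_mk, ZeroHom.coe_mk, Matrix.cons_val]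
  ring

lemma sh_meas (ν : Measure (Fin 5 → ℤ_[p])) [IsProbabilityMeasure ν] [ν.IsAddLeftInvariant]
    (t : ℤ_[p]) (B : Set (Fin 5 → ℤ_[p])) : ν (sh t ⁻¹' B) = ν B := by
  have hs : Function.Surjective (sh t) := by
    intro v
    refine ⟨sh (-t) v, ?_⟩
    have := sh_inv (-t) v
    rwa [neg_neg] at this
  have hi : Function.Injective (sh t) := by
    intro v w h
    rw [← sh_inv t v, h, sh_inv]
  have h := scale_aux ν (sh t) (sh_cont t) hi (sh t ⁻¹' B)
  rw [Set.image_preimage_eq _ hs, hs.range_eq, measure_univ, one_mul] at h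
  exact h.symm

def SS (p k : ℕ) [Fact p.Prime] : Set (Fin 5 → ℤ_[p]) :=
  {v | ‖(ofVec v).disc‖ ≤ uu p ^ (2 * (2 * k))}

/-- Multiplication by `p`. -/
def mp (p : ℕ) [Fact p.Prime] : (Fin 5 → ℤ_[p]) →+ (Fin 5 → ℤ_[p]) where
  toFun v := fun i => p * v i
  map_zero' := by ext i; simp
  map_add' x y := by ext i; simp [mul_add]

lemma mp_range (ν : Measure (Fin 5 → ℤ_[p])) [IsProbabilityMeasure ν] [ν.IsAddLeftInvariant] :
    ν (Set.range (mp p)) = ENNReal.ofReal (uu p ^ 10) := by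
  rw [uniq_aux ν (Measure.pi (fun _ => hm p))]
  have : Set.range (mp p) = Set.pi Set.univ (fun _ => {x : ℤ_[p] | ‖x‖ ≤ uu p ^ (2 * 1)}) := by
    ext v
    simp only [Set.mem_range, Set.mem_pi, Set.mem_univ, true_imp_iff, Set.mem_ofPred_eq,
      norm_le_uu, pow_one]
    constructor
    · rintro ⟨w, rfl⟩ i
      exact ⟨w i, rfl⟩
    · intro h
      choose w hw using h
      exact ⟨w, funext fun i => (hw i).symm⟩
  rw [this, Measure.pi_pi]
  simp only [hm_pow, Finset.prod_const, Finset.card_univ, Fintype.card_fin]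
  rw [← ENNReal.ofReal_pow (by have := uu_pos p; positivity), ← pow_mul]

lemma mp_meas (ν : Measure (Fin 5 → ℤ_[p])) [IsProbabilityMeasure ν] [ν.IsAddLeftInvariant]
    (S : Set (Fin 5 → ℤ_[p])) : ν (mp p '' S) = ENNReal.ofReal (uu p ^ 10) * ν S := by
  rw [← mp_range ν]
  have hp0 : (p : ℤ_[p]) ≠ 0 := by exact_mod_cast hp.out.ne_zero
  refine scale_aux ν (mp p) ?_ ?_ S
  · refine continuous_pi fun i => ?_
    simp only [mp]; dsimp; fun_prop
  · intro v w h
    ext1 i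
    exact mul_left_cancel₀ hp0 (congrFun h i)

lemma small_val {x : ℤ_[p]} (h : ‖x‖ < ‖(24 : ℤ_[p])‖) : ∃ g, x = 24 * (p * g) := by
  have h24 : (24 : ℤ_[p]) ≠ 0 := by norm_num
  obtain ⟨y, rfl⟩ := dvd_of_nrm h24 h.le
  rw [norm_mul] at h
  have hy : ‖y‖ < 1 := by
    by_contra hc
    exact absurd h (not_lt.2 (le_mul_of_one_le_right (norm_nonneg _) (not_lt.1 hc)))
  obtain ⟨g, rfl⟩ := (PadicInt.norm_lt_one_iff_dvd y).1 hy
  exact ⟨g, rfl⟩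

lemma interp (v : Fin 5 → ℤ_[p])
    (h : ∀ t ∈ ({0, 1, -1, 2, -2} : Finset ℤ), ‖sh (t : ℤ_[p]) v 0‖ < ‖(24 : ℤ_[p])‖) :
    ∃ w, v = mp p w := by
  have h24 : (24 : ℤ_[p]) ≠ 0 := by norm_num
  obtain ⟨g0, h0⟩ := small_val (h 0 (by simp))
  obtain ⟨g1, h1⟩ := small_val (h 1 (by simp))
  obtain ⟨g2, h2⟩ := small_val (h (-1) (by simp))
  obtain ⟨g3, h3⟩ := small_val (h 2 (by simp))
  obtain ⟨g4, h4⟩ := small_val (h (-2) (by simp))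
  simp only [sh, AddMonoidHom.coe_mk, ZeroHom.coe_mk, Matrix.cons_val] at h0 h1 h2 h3 h4
  push_cast at h0 h1 h2 h3 h4
  refine ⟨![24 * g0, 2 * (8 * (g1 - g2) - (g3 - g4)), 16 * (g1 + g2) - (g3 + g4) - 30 * g0,
    2 * ((g3 - g4) - 2 * (g1 - g2)), g3 + g4 - 4 * g1 - 4 * g2 + 6 * g0], ?_⟩
  ext1 i
  refine mul_left_cancel₀ h24 ?_
  fin_cases i <;> simp only [mp, AddMonoidHom.coe_mk, ZeroHom.coe_mk] <;> dsimp
  · linear_combination 24 * h0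
  · linear_combination 16 * (h1 - h2) - 2 * (h3 - h4)
  · linear_combination 16 * (h1 + h2) - (h3 + h4) - 30 * h0
  · linear_combination 2 * (h3 - h4) - 4 * (h1 - h2)
  · linear_combination h3 + h4 - 4 * h1 - 4 * h2 + 6 * h0

lemma mp_disc (w : Fin 5 → ℤ_[p]) : (ofVec (mp p w)).disc = p ^ 6 * (ofVec w).disc := by
  simp only [mp, ofVec, BQ.disc, AddMonoidHom.coe_mk, ZeroHom.coe_mk]
  ring

lemma SS_sub (k : ℕ) : SS p k ⊆ (mp p '' SS p (k - 3)) ∪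
    ⋃ t ∈ ({0, 1, -1, 2, -2} : Finset ℤ), sh (t : ℤ_[p]) ⁻¹' BB p k := by
  intro v hv
  by_cases h : ∀ t ∈ ({0, 1, -1, 2, -2} : Finset ℤ), ‖sh (t : ℤ_[p]) v 0‖ < ‖(24 : ℤ_[p])‖
  · left
    obtain ⟨w, rfl⟩ := interp v h
    refine ⟨w, ?_, rfl⟩
    rw [SS, Set.mem_ofPred_eq, norm_le_uu] at hv ⊢
    rw [mp_disc] at hv
    have hp0 : (p : ℤ_[p]) ≠ 0 := by exact_mod_cast hp.out.ne_zero
    by_cases hk : 3 ≤ k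
    · rw [show 2 * k = 6 + 2 * (k - 3) by omega, pow_add] at hv
      exact (mul_dvd_mul_iff_left (pow_ne_zero _ hp0)).1 hv
    · rw [show k - 3 = 0 by omega]
      simp
  · right
    push Not at h
    obtain ⟨t, ht, h⟩ := h
    refine Set.mem_biUnion ht ?_
    refine ⟨h, ?_⟩
    rw [sh_disc]
    exact hv

lemma recA (ν : Measure (Fin 5 → ℤ_[p])) [IsProbabilityMeasure ν] [ν.IsAddLeftInvariant]
    (k E : ℕ)
    (hE1 : E + ((2 * k + 2) / 3 + 1) / 2 ≤ 2 * ((2 * k + 2) / 3) + 2 * k + 1)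
    (hE2 : E ≤ 2 * ((2 * k + 2) / 3) + 2 * (((2 * k + 2) / 3 + 1) / 2) + 2 * ((k + 1) / 2))
    (hE3 : E + 3 * ((k + 2) / 3) ≤ 4 * k + 3) :
    ν (SS p k) ≤ ENNReal.ofReal (uu p ^ 10) * ν (SS p (k - 3)) +
      ENNReal.ofReal (7000 * K1 * ((k + 1) * uu p ^ E)) := by
  refine (measure_mono (SS_sub k)).trans ((measure_union_le _ _).trans ?_)
  rw [mp_meas]
  refine add_le_add le_rfl ?_
  refine (measure_biUnion_finset_le _ _).trans ?_
  have hb := BB_bound ν k E hE1 hE2 hE3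
  calc _ ≤ ∑ t ∈ ({0, 1, -1, 2, -2} : Finset ℤ),
        ENNReal.ofReal (K1 * (1400 * (k + 1) * uu p ^ E)) := by
        refine Finset.sum_le_sum fun t _ => ?_
        rw [sh_meas]
        exact hb
    _ = _ := by
        rw [Finset.sum_const, show ({0, 1, -1, 2, -2} : Finset ℤ).card = 5 from rfl, nsmul_eq_mul,
          show ((5 : ℕ) : ENNReal) = ENNReal.ofReal 5 by simp, ← ENNReal.ofReal_mul (by norm_num)]
        congr 1
        ring

def C1 : ℝ := 4 * (1 + 7000 * K1)

lemma K1_pos : 0 < K1 := by unfold K1; positivity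

lemma smallA (ν : Measure (Fin 5 → ℤ_[p])) [IsProbabilityMeasure ν] [ν.IsAddLeftInvariant]
    (k E : ℕ)
    (hE1 : E + ((2 * k + 2) / 3 + 1) / 2 ≤ 2 * ((2 * k + 2) / 3) + 2 * k + 1)
    (hE2 : E ≤ 2 * ((2 * k + 2) / 3) + 2 * (((2 * k + 2) / 3 + 1) / 2) + 2 * ((k + 1) / 2))
    (hE3 : E + 3 * ((k + 2) / 3) ≤ 4 * k + 3) (hE : E ≤ 10) :
    ν (SS p k) ≤ ENNReal.ofReal (C1 * ((k + 1) * uu p ^ E)) := by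
  have hu := uu_pos p
  have hu1 := uu_le p
  have hK := K1_pos
  refine (recA ν k E hE1 hE2 hE3).trans ?_
  refine (add_le_add (mul_le_mul' le_rfl prob_le_one) le_rfl).trans ?_
  rw [mul_one, ← ENNReal.ofReal_add (by positivity) (by positivity)]
  apply ENNReal.ofReal_le_ofReal
  have h1 : uu p ^ 10 ≤ uu p ^ E := pow_le_pow_of_le_one hu.le (by linarith) hE
  have h2 : uu p ^ E ≤ (k + 1) * uu p ^ E :=
    le_mul_of_one_le_left (by positivity) (by linarith [(Nat.cast_nonneg k : (0 : ℝ) ≤ k)])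
  set X := ((k : ℝ) + 1) * uu p ^ E
  have hX : 0 ≤ X := by positivity
  have : 0 ≤ K1 * X := by positivity
  unfold C1
  nlinarith

lemma genA (ν : Measure (Fin 5 → ℤ_[p])) [IsProbabilityMeasure ν] [ν.IsAddLeftInvariant]
    (k : ℕ) : ν (SS p k) ≤ ENNReal.ofReal (C1 * ((k + 1) * uu p ^ (3 * k))) := by
  have hu := uu_pos p
  have hu1 := uu_le p
  have hK := K1_pos
  have hC : 0 < C1 := by unfold C1; positivity
  induction k using Nat.strong_induction_on with
  | _ k ih =>
    by_cases hk : k < 3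
    · exact smallA ν k (3 * k) (by omega) (by omega) (by omega) (by omega)
    · obtain ⟨m, rfl⟩ : ∃ m, k = m + 3 := ⟨k - 3, by omega⟩
      have h1 := recA ν (m + 3) (3 * (m + 3)) (by omega) (by omega) (by omega)
      have h2 := ih m (by omega)
      rw [Nat.add_sub_cancel] at h1
      refine h1.trans ((add_le_add (mul_le_mul' le_rfl h2) le_rfl).trans ?_)
      rw [← ENNReal.ofReal_mul (by positivity),
        ← ENNReal.ofReal_add (by positivity) (by positivity)]
      apply ENNReal.ofReal_le_ofReal
      push_cast
      have e1 : uu p ^ 10 * (C1 * ((m + 1) * uu p ^ (3 * m))) =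
          uu p * (C1 * ((m + 1) * uu p ^ (3 * (m + 3)))) := by ring
      have e2 : uu p * (C1 * ((m + 1) * uu p ^ (3 * (m + 3)))) ≤
          3 / 4 * (C1 * ((m + 3 + 1) * uu p ^ (3 * (m + 3)))) := by
        gcongr
        linarith
      rw [e1]
      refine (add_le_add e2 le_rfl).trans ?_
      set X := ((m : ℝ) + 3 + 1) * uu p ^ (3 * (m + 3))
      have hX : 0 ≤ X := by positivity
      unfold C1
      nlinarith

end padic6

lemma discDiv_SS (p : Nat.Primes) (k : ℕ) : discDivSet p (2 * k) = SS (p : ℕ) k := by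
  ext v
  rw [SS, Set.mem_ofPred_eq, norm_le_uu]
  rfl

lemma rpow_uu (p : Nat.Primes) (n : ℕ) (x : ℝ) (hx : x = -(n / 2 : ℝ)) :
    ((p : ℕ) : ℝ) ^ x = uu (p : ℕ) ^ n := by
  rw [hx, uu, Real.sqrt_eq_rpow, ← Real.rpow_neg (Nat.cast_nonneg _), ← Real.rpow_natCast,
    ← Real.rpow_mul (Nat.cast_nonneg _)]
  congr 1
  ring

/-- For the Haar probability measure `ν` on `V(ℤ_p) ≅ ℤ_p⁵` (here:
any translation-invariant Borel probability measure), the density of forms with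
`p² ∣ Δ` is `O(p⁻²)`, with `p⁴ ∣ Δ` it is `O(p⁻⁴)`, and for `k ≥ 3` the density of
forms with `p^{2k} ∣ Δ` is `O(k p^{−3k/2})`, with absolute implied constants. -/
theorem disc_divisibility_density :
    ∃ C : ℝ, 0 < C ∧ ∀ (p : Nat.Primes) (ν : Measure (Fin 5 → ℤ_[(p : ℕ)])),
      IsProbabilityMeasure ν → (∀ t : Fin 5 → ℤ_[(p : ℕ)], ν.map (fun x => t + x) = ν) →
      ν (discDivSet p 2) ≤ ENNReal.ofReal (C * ((p : ℕ) : ℝ) ^ (-2 : ℝ)) ∧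
      ν (discDivSet p 4) ≤ ENNReal.ofReal (C * ((p : ℕ) : ℝ) ^ (-4 : ℝ)) ∧
      ∀ k : ℕ, 3 ≤ k →
        ν (discDivSet p (2 * k))
          ≤ ENNReal.ofReal (C * k * ((p : ℕ) : ℝ) ^ (-(3 * (k : ℝ) / 2))) := by

  have hK := K1_pos
  have hC : 0 < C1 := by unfold C1; positivity
  refine ⟨3 * C1, by positivity, ?_⟩
  intro p ν hν hinv
  have : ν.IsAddLeftInvariant := ⟨hinv⟩
  have hu := uu_pos (p : ℕ)
  refine ⟨?_, ?_, ?_⟩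
  · rw [show discDivSet p 2 = SS (p : ℕ) 1 from discDiv_SS p 1, rpow_uu p 4 _ (by norm_num)]
    refine (smallA ν 1 4 (by norm_num) (by norm_num) (by norm_num) (by norm_num)).trans ?_
    apply ENNReal.ofReal_le_ofReal
    have : 0 < C1 * uu (p : ℕ) ^ 4 := by positivity
    push_cast
    linarith
  · rw [show discDivSet p 4 = SS (p : ℕ) 2 from discDiv_SS p 2, rpow_uu p 8 _ (by norm_num)]
    refine (smallA ν 2 8 (by norm_num) (by norm_num) (by norm_num) (by norm_num)).trans ?_
    apply ENNReal.ofReal_le_ofReal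
    push_cast
    linarith
  · intro k hk
    rw [discDiv_SS, rpow_uu p (3 * k) _ (by push_cast; ring)]
    refine (genA ν k).trans ?_
    apply ENNReal.ofReal_le_ofReal
    have hk' : (3 : ℝ) ≤ k := by exact_mod_cast hk
    have h0 : 0 ≤ C1 * uu (p : ℕ) ^ (3 * k) := by positivity
    nlinarith

end BQPaper
end
end
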